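/- For every A > 0 there exists a constant C > 0, depending only on K and A, such that for every real x ≥ 2 and every nonzero ideal 𝔮 of 𝒪_K with 𝒩(𝔮) ≤ x: |∑_{𝔰 nonzero ideal, 𝒩(𝔰) ≤ x, (𝔰,𝔮)=1} Λ(𝔰) − x| ≤ C·x·(log x)^{−A}, where (𝔰,𝔮)=1 means 𝔰 and 𝔮 have no common prime ideal divisor. -/

import Mathlib

/-!
For a quadratic field `K` with quadratic character `χ = (d / ·)`, the ideals of norm `n` carry total
von Mangoldt weight `Λ(n) (1 + χ(n))` for every prime `n ∤ 4 d`, because such a prime splits or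
stays inert according to `χ(n)`. Prime powers and ramified primes contribute only `O(√x log x)`, and
the ideals that are not coprime to `𝔮` only `O((log x)²)`, since `𝔮` has `O(log x)` prime divisors.
It remains to show `∑_{n ≤ x} Λ(n) (1 + χ(n)) = x + O(x (log x)^{-j})` for every `j`.

The function `G = -ζ'/ζ - L'/L(·, χ) - ζ` is holomorphic at `s = 1`. Powers of `log |t|` bound `ζ`,
`L(·, χ)` and their derivatives in a region to the left of `Re s = 1` whose width shrinks like a
power of `1 / log |t|`, and the inequality `3 + 4 cos θ + cos 2θ ≥ 0` bounds them from below there.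
Hence `G` and all its derivatives grow at most like powers of `log |t|` on the line `Re s = 1`. In
the Perron formula for the sums with weight `x - n`, integrating by parts `j` times along that line
gains a factor `(log x)^{-j}`. Monotonicity of the unweighted sums removes the weight.
-/

open NumberField Ideal

noncomputable section
open scoped Classical

/-- The von Mangoldt function on ideals of `𝒪_K`. -/
def IdealLambda (K : Type) [Field K] [NumberField K] (𝔞 : Ideal (𝓞 K)) : ℝ :=
  if ∃ (𝔭 : Ideal (𝓞 K)) (k : ℕ), 𝔭.IsPrime ∧ 𝔭 ≠ ⊥ ∧ 0 < k ∧ 𝔞 = 𝔭 ^ k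
  then Real.log (Ideal.absNorm 𝔞.radical) else 0

/-- Two ideals have no common (nonzero) prime ideal divisor. -/
def CoprimeIdeals (K : Type) [Field K] [NumberField K] (𝔞 𝔟 : Ideal (𝓞 K)) : Prop :=
  ¬∃ 𝔭 : Ideal (𝓞 K), 𝔭.IsPrime ∧ 𝔭 ≠ ⊥ ∧ 𝔭 ∣ 𝔞 ∧ 𝔭 ∣ 𝔟

/-! ### Estimates for `s ↦ n ^ (-s)` near the line `Re s = 1` -/

/-- The logarithmic size of `s`, in terms of which both the width of the region around `Re s = 1`
and the growth of functions in it are measured. The shift by `8` makes it at least `2` everywhere.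
-/
def logSize (s : ℂ) : ℝ := Real.log (‖s‖ + 8)

lemma two_le_logSize (s : ℂ) : 2 ≤ logSize s := by
  rw [logSize, Real.le_log_iff_exp_le (by positivity)]
  have h : Real.exp 2 = Real.exp 1 * Real.exp 1 := by rw [← Real.exp_add]; norm_num
  nlinarith [Real.exp_one_lt_d9, Real.exp_pos 1, norm_nonneg s]

lemma logSize_pos (s : ℂ) : 0 < logSize s := by linarith [two_le_logSize s]

lemma one_div_logSize_le (s : ℂ) : 1 / logSize s ≤ 1 / 2 := by
  gcongr
  exact two_le_logSize s

lemma continuous_logSize : Continuous logSize :=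
  (continuous_norm.add continuous_const).log
    fun s ↦ (by positivity : 0 < ‖s‖ + 8).ne'

lemma logSize_le_two_mul {s w : ℂ} (h : ‖w‖ ≤ 2 * ‖s‖ + 1) : logSize w ≤ 2 * logSize s := by
  have hsq : 2 * logSize s = Real.log ((‖s‖ + 8) ^ 2) := by rw [Real.log_pow, logSize]; norm_num
  rw [hsq]
  exact Real.log_le_log (by positivity) (by nlinarith [norm_nonneg s])

lemma norm_rpow_div_logSize_le (s : ℂ) {c : ℝ} (hc : 0 ≤ c) :
    ‖s‖ ^ (c / logSize s) ≤ Real.exp c := by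
  have hl := logSize_pos s
  calc ‖s‖ ^ (c / logSize s) ≤ (‖s‖ + 8) ^ (c / logSize s) := by gcongr; linarith
    _ = Real.exp (logSize s * (c / logSize s)) := Real.rpow_def_of_pos (by positivity) _
    _ = Real.exp c := by rw [mul_div_cancel₀ _ hl.ne']

lemma le_rpow_mul_rpow_of_le {y a b θ : ℝ} (hy : 0 ≤ y) (ha : y ≤ a) (hb : y ≤ b)
    (h0 : 0 ≤ θ) (h1 : θ ≤ 1) : y ≤ a ^ (1 - θ) * b ^ θ := by
  have ha0 := hy.trans ha
  calc y = y ^ (1 - θ) * y ^ θ := by rw [← Real.rpow_add' hy (by norm_num)]; simp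
    _ ≤ a ^ (1 - θ) * b ^ θ := by gcongr

lemma hasDerivAt_ofReal_cpow_const_of_pos {x : ℝ} (hx : 0 < x) (c : ℂ) :
    HasDerivAt (fun y : ℝ ↦ (y : ℂ) ^ c) (c * (x : ℂ) ^ (c - 1)) x :=
  (Complex.hasStrictDerivAt_cpow_const
    (Complex.ofReal_mem_slitPlane.2 hx)).hasDerivAt.comp_ofReal

lemma norm_cpow_neg_sub_le {x y : ℝ} (hx : 0 < x) (hxy : x ≤ y) {s : ℂ} (hs : -1 ≤ s.re) :
    ‖(x : ℂ) ^ (-s) - (y : ℂ) ^ (-s)‖ ≤ ‖s‖ * x ^ (-s.re - 1) * (y - x) := by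
  have hderiv : ∀ u ∈ Set.Icc x y, HasDerivWithinAt (fun v : ℝ ↦ (v : ℂ) ^ (-s))
      (-s * (u : ℂ) ^ (-s - 1)) (Set.Icc x y) u := fun u hu ↦
    (hasDerivAt_ofReal_cpow_const_of_pos (hx.trans_le hu.1) _).hasDerivWithinAt
  have hbound : ∀ u ∈ Set.Icc x y, ‖-s * (u : ℂ) ^ (-s - 1)‖ ≤ ‖s‖ * x ^ (-s.re - 1) := by
    intro u hu
    rw [norm_mul, norm_neg, Complex.norm_cpow_eq_rpow_re_of_pos (hx.trans_le hu.1)]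
    gcongr
    simp only [Complex.sub_re, Complex.neg_re, Complex.one_re]
    exact Real.rpow_le_rpow_of_nonpos hx hu.1 (by linarith)
  have hmvt := (convex_Icc x y).norm_image_sub_le_of_norm_hasDerivWithin_le hderiv hbound
    (Set.left_mem_Icc.2 hxy) (Set.right_mem_Icc.2 hxy)
  rwa [norm_sub_rev, Real.norm_of_nonneg (sub_nonneg.2 hxy)] at hmvt

-- Interpolates between the trivial bound `2 x ^ (-Re s)` and the mean value bound
-- `‖s‖ x ^ (-Re s - 1)`, with the exponent chosen so that `‖s‖` contributes only a constant.
lemma norm_cpow_neg_sub_le_of_logSize {x y : ℝ} (hx : 1 ≤ x) (hxy : x ≤ y) (hyx : y ≤ x + 1)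
    {s : ℂ} (hs : 1 - 1 / logSize s ≤ s.re) :
    ‖(x : ℂ) ^ (-s) - (y : ℂ) ^ (-s)‖ ≤ 2 * Real.exp 2 * x ^ (-(1 + 1 / logSize s)) := by
  have hη := one_div_logSize_le s
  have hη0 : 0 < 1 / logSize s := one_div_pos.2 (logSize_pos s)
  have hθ : 2 / logSize s = 2 * (1 / logSize s) := by ring
  have hx0 : 0 < x := by linarith
  set θ := 2 / logSize s
  have htriv : ‖(x : ℂ) ^ (-s) - (y : ℂ) ^ (-s)‖ ≤ 2 * x ^ (-s.re) := by
    refine (norm_sub_le _ _).trans ?_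
    rw [Complex.norm_cpow_eq_rpow_re_of_pos hx0,
      Complex.norm_cpow_eq_rpow_re_of_pos (by linarith), Complex.neg_re]
    linarith [Real.rpow_le_rpow_of_nonpos hx0 hxy (z := -s.re) (by linarith)]
  have hmvt : ‖(x : ℂ) ^ (-s) - (y : ℂ) ^ (-s)‖ ≤ ‖s‖ * x ^ (-s.re - 1) :=
    (norm_cpow_neg_sub_le hx0 hxy (by linarith)).trans
      (mul_le_of_le_one_right (by positivity) (by linarith))
  have htwo : (2 : ℝ) ^ (1 - θ) ≤ 2 := Real.rpow_le_self_of_one_le one_le_two (by linarith)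
  calc _ ≤ (2 * x ^ (-s.re)) ^ (1 - θ) * (‖s‖ * x ^ (-s.re - 1)) ^ θ :=
        le_rpow_mul_rpow_of_le (norm_nonneg _) htriv hmvt (by linarith) (by linarith)
    _ = 2 ^ (1 - θ) * ‖s‖ ^ θ * x ^ (-s.re - θ) := by
        rw [Real.mul_rpow (by positivity) (by positivity),
          Real.mul_rpow (by positivity) (by positivity), ← Real.rpow_mul hx0.le,
          ← Real.rpow_mul hx0.le, mul_mul_mul_comm, ← Real.rpow_add hx0]
        ring_nf
    _ ≤ 2 * Real.exp 2 * x ^ (-(1 + 1 / logSize s)) := by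
        gcongr
        · exact norm_rpow_div_logSize_le s zero_le_two
        · linarith

lemma summable_add_one_rpow {c : ℝ} (hc : c < -1) : Summable fun n : ℕ ↦ ((n : ℝ) + 1) ^ c := by
  simpa using (summable_nat_add_iff 1).2 (Real.summable_nat_rpow.2 hc)

lemma sum_range_add_two_rpow_neg_le {η : ℝ} (hη : 0 < η) (m : ℕ) :
    ∑ n ∈ Finset.range m, ((n + 1 : ℕ) + 1 : ℝ) ^ (-(1 + η)) ≤ 1 / η := by
  have hanti : AntitoneOn (fun x : ℝ ↦ x ^ (-(1 + η))) (Set.Icc 1 (1 + m)) := fun x hx y _ hxy ↦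
    Real.rpow_le_rpow_of_nonpos (by linarith [hx.1]) hxy (by linarith)
  have hint : ∫ x in (1 : ℝ)..1 + m, x ^ (-(1 + η)) = (1 - (1 + m : ℝ) ^ (-η)) / η := by
    rw [integral_rpow (Or.inr ⟨by linarith, by simp [Set.uIcc_of_le]⟩), Real.one_rpow,
      show -(1 + η) + 1 = -η by ring, div_neg, ← neg_div, neg_sub]
  have hcomp := hanti.sum_le_integral
  rw [hint] at hcomp
  calc _ = ∑ n ∈ Finset.range m, (1 + (n + 1 : ℕ) : ℝ) ^ (-(1 + η)) := by simp only [add_comm]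
    _ ≤ _ := hcomp
    _ ≤ 1 / η := by gcongr; linarith [Real.rpow_nonneg (by positivity : (0 : ℝ) ≤ 1 + m) (-η)]

lemma tsum_add_one_rpow_neg_le {η : ℝ} (hη : 0 < η) :
    ∑' n : ℕ, ((n : ℝ) + 1) ^ (-(1 + η)) ≤ 1 + 1 / η := by
  rw [(summable_add_one_rpow (by linarith)).tsum_eq_zero_add]
  simp only [Nat.cast_zero, zero_add, Real.one_rpow]
  gcongr
  exact Real.tsum_le_of_sum_range_le (fun n ↦ by positivity) (sum_range_add_two_rpow_neg_le hη)

lemma norm_tsum_le_of_norm_le_logSize {s : ℂ} {f : ℕ → ℂ} {B : ℝ}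
    (hf : ∀ n : ℕ, ‖f n‖ ≤ B * ((n : ℝ) + 1) ^ (-(1 + 1 / logSize s))) (hB : 0 ≤ B) :
    ‖∑' n, f n‖ ≤ B * (1 + logSize s) := by
  have hη : 0 < 1 / logSize s := one_div_pos.2 (logSize_pos s)
  refine (tsum_of_norm_bounded
    ((summable_add_one_rpow (by linarith)).hasSum.mul_left B) hf).trans ?_
  gcongr
  simpa only [one_div_one_div] using tsum_add_one_rpow_neg_le hη

lemma summable_add_one_cpow {c : ℂ} (hc : c.re < -1) :
    Summable fun n : ℕ ↦ (((n : ℝ) + 1 : ℝ) : ℂ) ^ c := by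
  refine Summable.of_norm ((summable_add_one_rpow hc).congr fun n ↦ ?_)
  rw [Complex.norm_cpow_eq_rpow_re_of_pos (by positivity)]

lemma tendsto_add_one_cpow_zero {c : ℂ} (hc : c.re < 0) :
    Filter.Tendsto (fun m : ℕ ↦ (((m : ℝ) + 1 : ℝ) : ℂ) ^ c) Filter.atTop (nhds 0) := by
  rw [tendsto_zero_iff_norm_tendsto_zero]
  refine ((tendsto_rpow_neg_atTop (neg_pos.2 hc)).comp
    (Filter.tendsto_atTop_add_const_right _ 1 tendsto_natCast_atTop_atTop)).congr fun m ↦ ?_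
  rw [Complex.norm_cpow_eq_rpow_re_of_pos (by positivity), Function.comp_apply, neg_neg]

/-! ### Series representations to the left of the half-plane of convergence -/

lemma eq_tsum_of_eq_tsum_of_lt_re {F : ℂ → ℂ} (hF : Differentiable ℂ F) {f : ℕ → ℂ → ℂ}
    (hf : ∀ n, Differentiable ℂ (f n)) {σ τ : ℝ}
    (hbound : ∀ R : ℝ, ∃ u : ℕ → ℝ, Summable u ∧ ∀ n s, σ < s.re → ‖s‖ < R → ‖f n s‖ ≤ u n)
    (heq : ∀ s : ℂ, τ < s.re → F s = ∑' n, f n s) {s : ℂ} (hs : σ < s.re) :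
    F s = ∑' n, f n s := by
  set z₀ : ℂ := ((max σ τ + 1 : ℝ) : ℂ)
  have hz₀ : σ < z₀.re ∧ τ < z₀.re := by
    constructor <;> simp only [z₀, Complex.ofReal_re]
    · linarith [le_max_left σ τ]
    · linarith [le_max_right σ τ]
  set R := ‖s‖ + ‖z₀‖ + 1
  have hsR : ‖s‖ < R := by linarith [norm_nonneg z₀]
  have hz₀R : ‖z₀‖ < R := by linarith [norm_nonneg s]
  set U : Set ℂ := {z | σ < z.re} ∩ Metric.ball 0 R
  have hUo : IsOpen U := (isOpen_lt continuous_const Complex.continuous_re).inter Metric.isOpen_ball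
  have hUc : Convex ℝ U := (convex_halfSpace_re_gt _).inter (convex_ball _ _)
  obtain ⟨u, hu, hfu⟩ := hbound R
  have hd : DifferentiableOn ℂ (fun z ↦ ∑' n, f n z) U :=
    Complex.differentiableOn_tsum_of_summable_norm hu (fun n ↦ (hf n).differentiableOn) hUo
      fun n z hz ↦ hfu n z hz.1 (mem_ball_zero_iff.1 hz.2)
  refine (hF.differentiableOn.analyticOnNhd hUo).eqOn_of_preconnected_of_eventuallyEq
    (hd.analyticOnNhd hUo) hUc.isPreconnected ⟨hz₀.1, by simpa using hz₀R⟩ ?_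
    ⟨hs, by simpa using hsR⟩
  filter_upwards [(isOpen_lt continuous_const Complex.continuous_re).mem_nhds hz₀.2] with z hz
  exact heq z hz

lemma differentiable_const_cpow_of_pos {x : ℝ} (hx : 0 < x) {f : ℂ → ℂ}
    (hf : Differentiable ℂ f) : Differentiable ℂ fun s ↦ (x : ℂ) ^ f s := fun s ↦
  (hf s).const_cpow (Or.inl (by exact_mod_cast hx.ne'))

/-- The increment of `(s - 1) ζ(s)` over `[x, x + 1]`, that is
`(s - 1) ∫ u in x..x + 1, (x ^ (-s) - u ^ (-s))` with the integral evaluated so that the expression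
is visibly entire in `s`. -/
def zetaTerm (x : ℝ) (s : ℂ) : ℂ :=
  (s - 1) * (x : ℂ) ^ (-s) - (x : ℂ) ^ (1 - s) + ((x + 1 : ℝ) : ℂ) ^ (1 - s)

lemma differentiable_zetaTerm {x : ℝ} (hx : 0 < x) : Differentiable ℂ (zetaTerm x) :=
  (((differentiable_id.sub_const 1).mul
    (differentiable_const_cpow_of_pos hx differentiable_neg)).sub
    (differentiable_const_cpow_of_pos hx (differentiable_id.const_sub 1))).add
    (differentiable_const_cpow_of_pos (by positivity) (differentiable_id.const_sub 1))

lemma norm_zetaTerm_le {x : ℝ} (hx : 0 < x) {s : ℂ} {β : ℝ}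
    (hβ : ∀ u : ℝ, x ≤ u → u ≤ x + 1 → ‖(x : ℂ) ^ (-s) - (u : ℂ) ^ (-s)‖ ≤ β) :
    ‖zetaTerm x s‖ ≤ ‖s - 1‖ * β := by
  have hderiv : ∀ u ∈ Set.Icc x (x + 1), HasDerivWithinAt
      (fun v : ℝ ↦ (s - 1) * (v * (x : ℂ) ^ (-s)) + (v : ℂ) ^ (1 - s))
      ((s - 1) * ((x : ℂ) ^ (-s) - (u : ℂ) ^ (-s))) (Set.Icc x (x + 1)) u := by
    intro u hu
    have hlin := (((hasDerivAt_id (u : ℂ)).mul_const ((x : ℂ) ^ (-s))).const_mul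
      (s - 1)).comp_ofReal
    refine ((hlin.add (hasDerivAt_ofReal_cpow_const_of_pos (hx.trans_le hu.1) (1 - s))).congr_deriv
      ?_).hasDerivWithinAt
    rw [show (1 : ℂ) - s - 1 = -s by ring]
    ring
  have hbound : ∀ u ∈ Set.Icc x (x + 1), ‖(s - 1) * ((x : ℂ) ^ (-s) - (u : ℂ) ^ (-s))‖
      ≤ ‖s - 1‖ * β := by
    intro u hu
    rw [norm_mul]
    gcongr
    exact hβ u hu.1 hu.2
  have hmvt := (convex_Icc x (x + 1)).norm_image_sub_le_of_norm_hasDerivWithin_le hderiv hbound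
    (Set.left_mem_Icc.2 (by linarith)) (Set.right_mem_Icc.2 (by linarith))
  simp only [add_sub_cancel_left, norm_one, mul_one] at hmvt
  refine le_of_eq_of_le (congrArg norm ?_) hmvt
  rw [zetaTerm]
  push_cast
  ring

lemma norm_zetaTerm_add_one_le (n : ℕ) {s : ℂ} {σ : ℝ} (hσ : -1 ≤ σ) (hs : σ ≤ s.re) :
    ‖zetaTerm ((n : ℝ) + 1) s‖ ≤ ‖s - 1‖ * (‖s‖ * ((n : ℝ) + 1) ^ (-σ - 1)) := by
  have hn : (1 : ℝ) ≤ (n : ℝ) + 1 := by simp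
  refine norm_zetaTerm_le (by positivity) fun u hu hu' ↦ ?_
  calc _ ≤ ‖s‖ * ((n : ℝ) + 1) ^ (-s.re - 1) * (u - (n + 1)) :=
        norm_cpow_neg_sub_le (by positivity) hu (by linarith)
    _ ≤ ‖s‖ * ((n : ℝ) + 1) ^ (-s.re - 1) :=
        mul_le_of_le_one_right (by positivity) (by linarith)
    _ ≤ ‖s‖ * ((n : ℝ) + 1) ^ (-σ - 1) := by gcongr

lemma summable_zetaTerm {s : ℂ} (hs : 0 < s.re) :
    Summable fun n : ℕ ↦ zetaTerm ((n : ℝ) + 1) s :=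
  Summable.of_norm_bounded
    (((summable_add_one_rpow (by linarith)).mul_left ‖s‖).mul_left ‖s - 1‖)
    fun n ↦ norm_zetaTerm_add_one_le n (by linarith) le_rfl

/-- The entire function `(s - 1) ζ(s)`. -/
abbrev zetaOne : ℂ → ℂ := DirichletCharacter.LFunctionTrivChar₁ 1

lemma zetaOne_of_ne_one {s : ℂ} (hs : s ≠ 1) : zetaOne s = (s - 1) * riemannZeta s := by
  simp [zetaOne, DirichletCharacter.LFunctionTrivChar₁, Function.update_of_ne hs,
    DirichletCharacter.LFunctionTrivChar]

lemma zetaOne_one : zetaOne 1 = 1 := by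
  simp [zetaOne, DirichletCharacter.LFunctionTrivChar₁]

lemma differentiable_zetaOne : Differentiable ℂ zetaOne :=
  DirichletCharacter.differentiable_LFunctionTrivChar₁ 1

lemma tsum_add_one_cpow_neg_eq_riemannZeta {s : ℂ} (hs : 1 < s.re) :
    ∑' n : ℕ, (((n : ℝ) + 1 : ℝ) : ℂ) ^ (-s) = riemannZeta s := by
  rw [zeta_eq_tsum_one_div_nat_add_one_cpow hs]
  refine tsum_congr fun n ↦ ?_
  rw [Complex.cpow_neg, one_div]
  push_cast
  rfl

lemma tsum_zetaTerm_of_one_lt_re {s : ℂ} (hs : 1 < s.re) :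
    ∑' n : ℕ, zetaTerm ((n : ℝ) + 1) s = (s - 1) * riemannZeta s - 1 := by
  set g : ℕ → ℂ := fun n ↦ (((n : ℝ) + 1 : ℝ) : ℂ) ^ (1 - s)
  have hterm (n : ℕ) : zetaTerm ((n : ℝ) + 1) s =
      (s - 1) * (((n : ℝ) + 1 : ℝ) : ℂ) ^ (-s) - (g n - g (n + 1)) := by
    simp only [zetaTerm, g]
    push_cast
    ring
  have hs₁ : Summable fun n : ℕ ↦ (s - 1) * (((n : ℝ) + 1 : ℝ) : ℂ) ^ (-s) :=
    (summable_add_one_cpow (by simpa using hs)).mul_left _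
  have hs₂ : Summable fun n ↦ g n - g (n + 1) :=
    (hs₁.sub (summable_zetaTerm (by linarith))).congr fun n ↦ by rw [hterm]; ring
  have htelescope : ∑' n, (g n - g (n + 1)) = 1 := by
    refine tendsto_nhds_unique hs₂.hasSum.tendsto_sum_nat ?_
    simp only [Finset.sum_range_sub']
    simpa [g] using (tendsto_add_one_cpow_zero (c := 1 - s) (by simpa using hs)).const_sub (g 0)
  simp only [hterm]
  rw [hs₁.tsum_sub hs₂, htelescope, tsum_mul_left, tsum_add_one_cpow_neg_eq_riemannZeta hs]

lemma zetaOne_eq_tsum {s : ℂ} (hs : 0 < s.re) :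
    zetaOne s = 1 + ∑' n : ℕ, zetaTerm ((n : ℝ) + 1) s := by
  rw [← sub_eq_iff_eq_add']
  refine eq_tsum_of_eq_tsum_of_lt_re (F := fun s ↦ zetaOne s - 1) (σ := s.re / 2) (τ := 1)
    (differentiable_zetaOne.sub_const 1)
    (fun n ↦ differentiable_zetaTerm (by positivity)) (fun R ↦ ?_) (fun z hz ↦ ?_) (by linarith)
  · refine ⟨fun n ↦ (R + 1) * (R * ((n : ℝ) + 1) ^ (-(s.re / 2) - 1)),
      ((summable_add_one_rpow (by linarith)).mul_left _).mul_left _, fun n z hz hzR ↦ ?_⟩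
    refine (norm_zetaTerm_add_one_le n (by linarith) hz.le).trans ?_
    have hz1 : ‖z - 1‖ ≤ R + 1 := (norm_sub_le _ _).trans (by simpa using hzR.le)
    have hR : 0 ≤ R := (norm_nonneg z).trans hzR.le
    dsimp only
    gcongr
  · have hz1 : z ≠ 1 := by rintro rfl; simp at hz
    simp only [tsum_zetaTerm_of_one_lt_re hz, zetaOne_of_ne_one hz1]

lemma norm_zetaOne_le {s : ℂ} (hs : 1 - 1 / logSize s ≤ s.re) :
    ‖zetaOne s‖ ≤ 1 + ‖s - 1‖ * (2 * Real.exp 2 * (1 + logSize s)) := by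
  rw [zetaOne_eq_tsum (by linarith [one_div_logSize_le s])]
  refine (norm_add_le _ _).trans ?_
  rw [norm_one, ← mul_assoc]
  gcongr
  refine norm_tsum_le_of_norm_le_logSize (fun n ↦ ?_) (by positivity)
  rw [mul_assoc]
  exact norm_zetaTerm_le (by positivity) fun u hu hu' ↦
    norm_cpow_neg_sub_le_of_logSize (by simp) hu hu' hs

lemma LSeries_eq_tsum_add_one {a : ℕ → ℂ} {s : ℂ} (h : LSeriesSummable a s) :
    LSeries a s = ∑' n : ℕ, a (n + 1) * (((n : ℝ) + 1 : ℝ) : ℂ) ^ (-s) := by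
  rw [LSeries, h.tsum_eq_zero_add, LSeries.term_zero, zero_add]
  refine tsum_congr fun n ↦ ?_
  rw [LSeries.term_of_ne_zero n.succ_ne_zero, Complex.cpow_neg, div_eq_mul_inv]
  push_cast
  rfl

/-- The terms of the Dirichlet series of `a` after summation by parts. They are shifted so that the
`n`-th one measures the increment of `x ^ (-s)` over `[n + 1, n + 2]`. -/
def abelTerm (a : ℕ → ℂ) (n : ℕ) (s : ℂ) : ℂ :=
  (∑ m ∈ Finset.range (n + 2), a m) *
    ((((n : ℝ) + 1 : ℝ) : ℂ) ^ (-s) - (((n : ℝ) + 2 : ℝ) : ℂ) ^ (-s))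

lemma differentiable_abelTerm (a : ℕ → ℂ) (n : ℕ) : Differentiable ℂ (abelTerm a n) :=
  ((differentiable_const_cpow_of_pos (by positivity) differentiable_neg).sub
    (differentiable_const_cpow_of_pos (by positivity) differentiable_neg)).const_mul _

section AbelSummation

variable {a : ℕ → ℂ} {B : ℝ}

lemma norm_abelTerm_le (hB : ∀ n, ‖∑ m ∈ Finset.range n, a m‖ ≤ B) (n : ℕ) {s : ℂ} {σ : ℝ}
    (hσ : -1 ≤ σ) (hs : σ ≤ s.re) :
    ‖abelTerm a n s‖ ≤ B * (‖s‖ * ((n : ℝ) + 1) ^ (-σ - 1)) := by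
  rw [abelTerm, norm_mul]
  have hB0 : 0 ≤ B := (norm_nonneg _).trans (hB 0)
  have hn : (1 : ℝ) ≤ (n : ℝ) + 1 := by simp
  gcongr
  · exact hB _
  · calc _ ≤ ‖s‖ * ((n : ℝ) + 1) ^ (-s.re - 1) * ((n : ℝ) + 2 - (n + 1)) :=
          norm_cpow_neg_sub_le (by positivity) (by linarith) (by linarith)
      _ = ‖s‖ * ((n : ℝ) + 1) ^ (-s.re - 1) := by ring
      _ ≤ ‖s‖ * ((n : ℝ) + 1) ^ (-σ - 1) := by gcongr

lemma norm_tsum_abelTerm_le (hB : ∀ n, ‖∑ m ∈ Finset.range n, a m‖ ≤ B) {s : ℂ}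
    (hs : 1 - 1 / logSize s ≤ s.re) :
    ‖∑' n, abelTerm a n s‖ ≤ B * (2 * Real.exp 2) * (1 + logSize s) := by
  have hB0 : 0 ≤ B := (norm_nonneg _).trans (hB 0)
  refine norm_tsum_le_of_norm_le_logSize (fun n ↦ ?_) (by positivity)
  rw [abelTerm, norm_mul, mul_assoc]
  gcongr
  · exact hB _
  · exact norm_cpow_neg_sub_le_of_logSize (by simp) (by linarith) (by linarith) hs

lemma LSeries_eq_tsum_abelTerm (ha : a 0 = 0) (hB : ∀ n, ‖∑ m ∈ Finset.range n, a m‖ ≤ B) {s : ℂ}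
    (hs : 1 < s.re) (h : LSeriesSummable a s) : LSeries a s = ∑' n, abelTerm a n s := by
  set A : ℕ → ℂ := fun n ↦ ∑ m ∈ Finset.range n, a m
  set u : ℕ → ℂ := fun n ↦ (((n : ℝ) + 1 : ℝ) : ℂ) ^ (-s)
  have hu : Summable fun n ↦ ‖u n‖ := (summable_add_one_cpow (by simpa using hs)).norm
  have hAu (k l : ℕ) : Summable fun n ↦ A (n + k) * u (n + l) := by
    refine Summable.of_norm_bounded (((summable_nat_add_iff l).2 hu).mul_left B) fun n ↦ ?_
    rw [norm_mul]
    gcongr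
    exact hB _
  have hAu₀ (k : ℕ) : Summable fun n ↦ A (n + k) * u n := hAu k 0
  have hshift : ∑' n, A (n + 1) * u n = ∑' n, A (n + 2) * u (n + 1) := by
    rw [(hAu₀ 1).tsum_eq_zero_add]
    simp [A, ha, add_assoc]
  calc LSeries a s = ∑' n, a (n + 1) * u n := LSeries_eq_tsum_add_one h
    _ = ∑' n, (A (n + 2) * u n - A (n + 1) * u n) := by
        refine tsum_congr fun n ↦ ?_
        rw [← sub_mul, show A (n + 2) = A (n + 1) + a (n + 1) from Finset.sum_range_succ _ _,
          add_sub_cancel_left]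
    _ = ∑' n, (A (n + 2) * u n - A (n + 2) * u (n + 1)) := by
        rw [(hAu₀ 2).tsum_sub (hAu₀ 1), hshift, ← (hAu₀ 2).tsum_sub (hAu 2 1)]
    _ = ∑' n, abelTerm a n s := by
        refine tsum_congr fun n ↦ ?_
        simp only [abelTerm, A, u, mul_sub, Nat.cast_add, Nat.cast_one, add_assoc,
          one_add_one_eq_two]

end AbelSummation

section DirichletCharacter

variable {N : ℕ} [NeZero N] {χ : DirichletCharacter ℂ N}

lemma sum_range_dirichletCharacter_eq_zero (hχ : χ ≠ 1) (k : ℕ) :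
    ∑ m ∈ Finset.range N, χ ((k + m : ℕ) : ZMod N) = 0 := by
  rw [← MulChar.sum_eq_zero_of_ne_one hχ, ← Equiv.sum_comp (Equiv.addLeft (k : ZMod N))]
  refine Finset.sum_nbij' (fun m ↦ (m : ZMod N)) (fun a ↦ a.val) (by simp)
    (fun a _ ↦ by simpa using ZMod.val_lt a) (fun m hm ↦ ZMod.val_cast_of_lt (by simpa using hm))
    (fun a _ ↦ ZMod.natCast_zmod_val a) (by simp)

lemma norm_sum_range_dirichletCharacter_le (hχ : χ ≠ 1) (n : ℕ) :
    ‖∑ m ∈ Finset.range n, χ (m : ZMod N)‖ ≤ N := by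
  induction n using Nat.strong_induction_on with
  | _ n ih =>
    rcases lt_or_ge n N with h | h
    · calc _ ≤ ∑ m ∈ Finset.range n, ‖χ (m : ZMod N)‖ := norm_sum_le _ _
        _ ≤ ∑ _m ∈ Finset.range n, (1 : ℝ) := Finset.sum_le_sum fun m _ ↦ χ.norm_le_one _
        _ ≤ N := by simpa using h.le
    · obtain ⟨k, rfl⟩ := Nat.exists_eq_add_of_le' h
      rw [Finset.sum_range_add, sum_range_dirichletCharacter_eq_zero hχ, add_zero]
      exact ih k (by have := NeZero.pos N; omega)

lemma dirichletCharacter_apply_zero (hχ : χ ≠ 1) : χ 0 = 0 := by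
  simpa using DirichletCharacter.map_zero' χ (fun h ↦ hχ (by subst h; exact χ.level_one))

lemma LFunction_eq_tsum_abelTerm (hχ : χ ≠ 1) {s : ℂ} (hs : 0 < s.re) :
    χ.LFunction s = ∑' n, abelTerm (fun m ↦ χ m) n s := by
  have hB := norm_sum_range_dirichletCharacter_le hχ
  refine eq_tsum_of_eq_tsum_of_lt_re (σ := s.re / 2) (τ := 1)
    (DirichletCharacter.differentiable_LFunction hχ) (fun n ↦ differentiable_abelTerm _ n)
    (fun R ↦ ?_) (fun z hz ↦ ?_) (by linarith)
  · refine ⟨fun n ↦ N * (R * ((n : ℝ) + 1) ^ (-(s.re / 2) - 1)),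
      ((summable_add_one_rpow (by linarith)).mul_left _).mul_left _, fun n z hz hzR ↦ ?_⟩
    refine (norm_abelTerm_le hB n (by linarith) hz.le).trans ?_
    dsimp only
    gcongr
  · rw [χ.LFunction_eq_LSeries hz]
    exact LSeries_eq_tsum_abelTerm (by simpa using dirichletCharacter_apply_zero hχ) hB hz
      (χ.LSeriesSummable_of_one_lt_re hz)

lemma norm_LFunction_le (hχ : χ ≠ 1) {s : ℂ} (hs : 1 - 1 / logSize s ≤ s.re) :
    ‖χ.LFunction s‖ ≤ N * (4 * Real.exp 2) * logSize s := by
  rw [LFunction_eq_tsum_abelTerm hχ (by linarith [one_div_logSize_le s])]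
  calc _ ≤ N * (2 * Real.exp 2) * (1 + logSize s) :=
        norm_tsum_abelTerm_le (norm_sum_range_dirichletCharacter_le hχ) hs
    _ ≤ N * (2 * Real.exp 2) * (2 * logSize s) := by
        gcongr
        linarith [two_le_logSize s]
    _ = _ := by ring

end DirichletCharacter

/-! ### Zero-free regions and logarithmic derivatives -/

/-- A neighbourhood of the line `Re s = 1` whose width shrinks like a power of `1 / logSize s`. It
is cut off at `Re s = 3`, as only its behaviour near the line matters. -/
def logRegion (κ : ℝ) (M : ℕ) : Set ℂ := {s | 1 - κ / logSize s ^ M < s.re ∧ s.re < 3}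

lemma isOpen_logRegion (κ : ℝ) (M : ℕ) : IsOpen (logRegion κ M) := by
  refine IsOpen.inter (isOpen_lt (continuous_const.sub (continuous_const.div
    (continuous_logSize.pow M) fun s ↦ ?_)) Complex.continuous_re)
    (isOpen_lt Complex.continuous_re continuous_const)
  exact pow_ne_zero M (logSize_pos s).ne'

lemma logRegion_subset {κ κ' : ℝ} {M M' : ℕ} (hκ : κ' ≤ κ) (hκ' : 0 ≤ κ') (hM : M ≤ M') :
    logRegion κ' M' ⊆ logRegion κ M := by
  rintro s ⟨h1, h2⟩
  have hwidth : κ' / logSize s ^ M' ≤ κ / logSize s ^ M :=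
    div_le_div₀ (hκ'.trans hκ) hκ (pow_pos (logSize_pos s) M)
      (pow_le_pow_right₀ (by linarith [two_le_logSize s]) hM)
  exact ⟨by linarith, h2⟩

lemma le_re_of_mem_logRegion {κ η : ℝ} {M : ℕ} (hκ : 0 ≤ κ) (hη : κ ≤ η) (hM : 1 ≤ M) {s : ℂ}
    (hs : s ∈ logRegion κ M) : 1 - η / logSize s ≤ s.re := by
  simpa using (logRegion_subset hη hκ hM hs).1.le

/-- Functions holomorphic near `Re s = 1` and growing at most like a power of a logarithm there. -/
def LogBounded (G : ℂ → ℂ) : Prop :=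
  ∃ κ C : ℝ, ∃ M B : ℕ, 0 < κ ∧ 0 ≤ C ∧ DifferentiableOn ℂ G (logRegion κ M) ∧
    ∀ s ∈ logRegion κ M, ‖G s‖ ≤ C * logSize s ^ B

lemma LogBounded.neg {G : ℂ → ℂ} (hG : LogBounded G) : LogBounded (fun s ↦ -G s) := by
  obtain ⟨κ, C, M, B, hκ, hC, hd, hb⟩ := hG
  exact ⟨κ, C, M, B, hκ, hC, hd.neg, fun s hs ↦ by rw [norm_neg]; exact hb s hs⟩

lemma LogBounded.add {G H : ℂ → ℂ} (hG : LogBounded G) (hH : LogBounded H) :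
    LogBounded (fun s ↦ G s + H s) := by
  obtain ⟨κ, C, M, B, hκ, hC, hd, hb⟩ := hG
  obtain ⟨κ', C', M', B', hκ', hC', hd', hb'⟩ := hH
  have hsub : logRegion (min κ κ') (max M M') ⊆ logRegion κ M :=
    logRegion_subset (min_le_left _ _) (by positivity) (le_max_left _ _)
  have hsub' : logRegion (min κ κ') (max M M') ⊆ logRegion κ' M' :=
    logRegion_subset (min_le_right _ _) (by positivity) (le_max_right _ _)
  refine ⟨min κ κ', C + C', max M M', max B B', by positivity, by positivity,
    (hd.mono hsub).add (hd'.mono hsub'), fun s hs ↦ ?_⟩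
  have hl : 1 ≤ logSize s := by linarith [two_le_logSize s]
  calc ‖G s + H s‖ ≤ ‖G s‖ + ‖H s‖ := norm_add_le _ _
    _ ≤ C * logSize s ^ B + C' * logSize s ^ B' := add_le_add (hb s (hsub hs)) (hb' s (hsub' hs))
    _ ≤ C * logSize s ^ max B B' + C' * logSize s ^ max B B' := by
        gcongr
        exacts [le_max_left _ _, le_max_right _ _]
    _ = _ := by ring

section ZeroFreeRegion

variable {F : ℂ → ℂ} {C c : ℝ}

lemma norm_deriv_le_logSize_sq (hF : DifferentiableOn ℂ F {s | 0 < s.re}) (hC : 0 ≤ C)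
    (hb : ∀ s : ℂ, 1 - 1 / logSize s ≤ s.re → ‖F s‖ ≤ C * logSize s) {s : ℂ}
    (hs : 1 - 1 / (4 * logSize s) ≤ s.re) : ‖deriv F s‖ ≤ 8 * C * logSize s ^ 2 := by
  have hl := two_le_logSize s
  set r := 1 / (4 * logSize s) with hr
  have hr0 : 0 < r := by positivity
  have hr1 : r ≤ 1 / 8 := one_div_le_one_div_of_le (by norm_num) (by linarith)
  have hball : ∀ w ∈ Metric.closedBall s r,
      1 - 1 / logSize w ≤ w.re ∧ logSize w ≤ 2 * logSize s := by
    intro w hw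
    have hws : ‖w - s‖ ≤ r := by simpa [dist_eq_norm] using hw
    have hre : |w.re - s.re| ≤ r := by simpa using (Complex.abs_re_le_norm (w - s)).trans hws
    have hlw : logSize w ≤ 2 * logSize s :=
      logSize_le_two_mul (by linarith [norm_le_norm_add_norm_sub' w s, norm_nonneg s])
    have hlw0 := logSize_pos w
    have hr2 : r + r ≤ 1 / logSize w := by
      calc r + r = 1 / (2 * logSize s) := by rw [hr]; field_simp; norm_num
        _ ≤ 1 / logSize w := by gcongr
    exact ⟨by linarith [(abs_le.1 hre).1], hlw⟩
  have hd : DiffContOnCl ℂ F (Metric.ball s r) :=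
    (hF.mono fun w hw ↦ show 0 < w.re by
      linarith [(hball w (Metric.closure_ball_subset_closedBall hw)).1,
        one_div_logSize_le w]).diffContOnCl
  refine (Complex.norm_deriv_le_of_forall_mem_sphere_norm_le hr0 hd (C := C * (2 * logSize s))
    fun w hw ↦ ?_).trans_eq (by rw [hr]; field_simp; ring)
  obtain ⟨hre, hlw⟩ := hball w (Metric.sphere_subset_closedBall hw)
  exact (hb w hre).trans (by gcongr)

lemma norm_sub_le_logSize_sq (hF : DifferentiableOn ℂ F {s | 0 < s.re}) (hC : 0 ≤ C)
    (hb : ∀ s : ℂ, 1 - 1 / logSize s ≤ s.re → ‖F s‖ ≤ C * logSize s) {s w : ℂ}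
    (hs : 1 - 1 / (8 * logSize s) ≤ s.re) (hsw : s.re ≤ w.re) (hws : ‖w - s‖ ≤ 1) :
    ‖F w - F s‖ ≤ 32 * C * logSize s ^ 2 * ‖w - s‖ := by
  set S : Set ℂ := {z | s.re ≤ z.re} ∩ Metric.closedBall s 1
  have hS : Convex ℝ S := (convex_halfSpace_re_ge _).inter (convex_closedBall _ _)
  have hSz : ∀ z ∈ S, 1 - 1 / (4 * logSize z) ≤ z.re ∧ logSize z ≤ 2 * logSize s := by
    rintro z ⟨hz : s.re ≤ z.re, hz1⟩
    have hzs : ‖z - s‖ ≤ 1 := by simpa [dist_eq_norm] using hz1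
    have hlz : logSize z ≤ 2 * logSize s :=
      logSize_le_two_mul (by linarith [norm_le_norm_add_norm_sub' z s, norm_nonneg s])
    have hl0 := logSize_pos z
    have : 1 / (8 * logSize s) ≤ 1 / (4 * logSize z) :=
      one_div_le_one_div_of_le (by positivity) (by linarith)
    exact ⟨by linarith, hlz⟩
  refine hS.norm_image_sub_le_of_norm_deriv_le (𝕜 := ℂ) (fun z hz ↦ ?_) (fun z hz ↦ ?_)
    ⟨le_refl s.re, by simp⟩ ⟨hsw, by simpa [dist_eq_norm] using hws⟩
  · have h0 : 0 < z.re := by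
      have := two_le_logSize z
      have : 1 / (4 * logSize z) ≤ 1 / 8 :=
        one_div_le_one_div_of_le (by norm_num) (by linarith)
      linarith [(hSz z hz).1]
    exact (hF z h0).differentiableAt
      ((isOpen_lt continuous_const Complex.continuous_re).mem_nhds h0)
  · obtain ⟨hre, hlz⟩ := hSz z hz
    have hl0 := logSize_pos z
    calc ‖deriv F z‖ ≤ 8 * C * logSize z ^ 2 := norm_deriv_le_logSize_sq hF hC hb hre
      _ ≤ 8 * C * (2 * logSize s) ^ 2 := by gcongr
      _ = 32 * C * logSize s ^ 2 := by ring

lemma le_norm_of_one_add_le_re {K κ L : ℝ} (hK : 0 < K) (hκ : 0 < κ) (hκc : κ * (32 * K ^ 4) ≤ c)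
    (hlow : ∀ s : ℂ, 1 < s.re → s.re ≤ 4 → c * (s.re - 1) ^ 3 ≤ ‖F s‖ ^ 4 * logSize s)
    (hL : 0 < L) {w : ℂ} (hwL : logSize w ≤ 2 * L) (hw : 1 + κ / L ^ 9 ≤ w.re) (hw4 : w.re ≤ 4) :
    2 * (K * κ / L ^ 7) ≤ ‖F w‖ := by
  have hδ : 0 < κ / L ^ 9 := by positivity
  have hc : 0 ≤ c := le_trans (by positivity) hκc
  refine le_of_pow_le_pow_left₀ four_ne_zero (norm_nonneg _)
    (le_of_mul_le_mul_right ?_ (by positivity : 0 < 2 * L))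
  calc (2 * (K * κ / L ^ 7)) ^ 4 * (2 * L) = κ * (32 * K ^ 4) * (κ / L ^ 9) ^ 3 := by
        field_simp; ring
    _ ≤ c * (w.re - 1) ^ 3 := by gcongr; linarith
    _ ≤ ‖F w‖ ^ 4 * logSize w := hlow w (by linarith) hw4
    _ ≤ ‖F w‖ ^ 4 * (2 * L) := by gcongr

-- To the right of `1 + κ / L ^ 9` the polynomial lower bound wins; to the left of it one moves
-- horizontally to that edge, which by the derivative bound costs at most half of the lower bound.
lemma le_norm_of_mem_logRegion (hF : DifferentiableOn ℂ F {s | 0 < s.re}) (hC : 0 < C)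
    (hb : ∀ s : ℂ, 1 - 1 / logSize s ≤ s.re → ‖F s‖ ≤ C * logSize s)
    (hlow : ∀ s : ℂ, 1 < s.re → s.re ≤ 4 → c * (s.re - 1) ^ 3 ≤ ‖F s‖ ^ 4 * logSize s)
    {κ : ℝ} (hκ : 0 < κ) (hκ8 : κ ≤ 1 / 8) (hκc : κ * (32 * (64 * C) ^ 4) ≤ c) {s : ℂ}
    (hs : s ∈ logRegion κ 9) : 64 * C * κ / logSize s ^ 7 ≤ ‖F s‖ := by
  have hl := two_le_logSize s
  have hsre := le_re_of_mem_logRegion hκ.le hκ8 (by norm_num) hs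
  set L := logSize s with hL
  have hpos : 0 < 64 * C * κ / L ^ 7 := by positivity
  rcases le_or_gt (1 + κ / L ^ 9) s.re with h | h
  · linarith [le_norm_of_one_add_le_re (by positivity) hκ hκc hlow (by linarith)
      (by linarith : logSize s ≤ 2 * L) h (by linarith [hs.2])]
  set δ := κ / L ^ 9 with hδ
  have hδ1 : 2 * δ ≤ 1 := by
    have : δ ≤ κ := div_le_self hκ.le (one_le_pow₀ (by linarith))
    linarith
  set w : ℂ := s + ((1 + δ - s.re : ℝ) : ℂ) with hw
  have hwre : w.re = 1 + δ := by simp [hw]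
  have hws : ‖w - s‖ ≤ 2 * δ := by
    rw [hw, add_sub_cancel_left, Complex.norm_real, Real.norm_of_nonneg (by linarith)]
    linarith [hs.1]
  have hwL : logSize w ≤ 2 * L :=
    logSize_le_two_mul (by linarith [norm_le_norm_add_norm_sub' w s, norm_nonneg s])
  have hFw := le_norm_of_one_add_le_re (by positivity) hκ hκc hlow (by linarith) hwL hwre.ge
    (by linarith)
  have hdiff : ‖F w - F s‖ ≤ 64 * C * κ / L ^ 7 := by
    calc ‖F w - F s‖ ≤ 32 * C * L ^ 2 * ‖w - s‖ :=
          norm_sub_le_logSize_sq hF hC.le hb (by rwa [div_div] at hsre) (by linarith) (by linarith)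
      _ ≤ 32 * C * L ^ 2 * (2 * δ) := by gcongr
      _ = 64 * C * κ / L ^ 7 := by rw [hδ]; field_simp; norm_num
  linarith [norm_le_norm_add_norm_sub' (F w) (F s)]

lemma logBounded_logDeriv (hF : DifferentiableOn ℂ F {s | 0 < s.re}) (hC : 0 < C)
    (hb : ∀ s : ℂ, 1 - 1 / logSize s ≤ s.re → ‖F s‖ ≤ C * logSize s) (hc : 0 < c)
    (hlow : ∀ s : ℂ, 1 < s.re → s.re ≤ 4 → c * (s.re - 1) ^ 3 ≤ ‖F s‖ ^ 4 * logSize s) :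
    LogBounded (logDeriv F) := by
  set κ := min (1 / 8) (c / (32 * (64 * C) ^ 4))
  have hκ : 0 < κ := by positivity
  have hκ8 : κ ≤ 1 / 8 := min_le_left _ _
  have hκc : κ * (32 * (64 * C) ^ 4) ≤ c := (le_div_iff₀ (by positivity)).1 (min_le_right _ _)
  have hlower {s : ℂ} (hs : s ∈ logRegion κ 9) :=
    le_norm_of_mem_logRegion hF hC hb hlow hκ hκ8 hκc hs
  have hre : ∀ s ∈ logRegion κ 9, 1 - 1 / (4 * logSize s) ≤ s.re := fun s hs ↦ by
    rw [← div_div]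
    exact le_re_of_mem_logRegion hκ.le (by linarith) (by norm_num) hs
  refine ⟨κ, 8 * C / (64 * C * κ), 9, 9, hκ, by positivity, ?_, fun s hs ↦ ?_⟩
  · have hd : DifferentiableOn ℂ F (logRegion κ 9) := hF.mono fun s hs ↦ show 0 < s.re by
      have := le_re_of_mem_logRegion hκ.le (by linarith : κ ≤ 1) (by norm_num) hs
      linarith [one_div_logSize_le s]
    refine (hd.deriv (isOpen_logRegion _ _)).div hd fun s hs ↦ norm_pos_iff.1 ?_
    have hl := logSize_pos s
    exact lt_of_lt_of_le (by positivity) (hlower hs)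
  · have hl := logSize_pos s
    rw [logDeriv_apply, norm_div]
    calc ‖deriv F s‖ / ‖F s‖ ≤ (8 * C * logSize s ^ 2) / (64 * C * κ / logSize s ^ 7) := by
          gcongr
          · exact norm_deriv_le_logSize_sq hF hC.le hb (hre s hs)
          · exact hlower hs
      _ = _ := by field_simp

-- The `3-4-1` inequality is only needed away from the real axis, where the pole of `ζ` at `1` does
-- not interfere; near the axis compactness suffices.
lemma exists_lower_bound_of_ne_zero (hF : ContinuousOn F {s | 0 < s.re})
    (hne : ∀ s : ℂ, 1 ≤ s.re → F s ≠ 0) (hc : 0 < c)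
    (h : ∀ s : ℂ, 1 < s.re → s.re ≤ 4 → 1 / 2 ≤ |s.im| →
      c * (s.re - 1) ^ 3 ≤ ‖F s‖ ^ 4 * logSize s) :
    ∃ c : ℝ, 0 < c ∧ ∀ s : ℂ, 1 < s.re → s.re ≤ 4 →
      c * (s.re - 1) ^ 3 ≤ ‖F s‖ ^ 4 * logSize s := by
  set K : Set ℂ := Set.Icc 1 4 ×ℂ Set.Icc (-(1 / 2)) (1 / 2)
  obtain ⟨z, hz, hmin⟩ := (isCompact_Icc.reProdIm isCompact_Icc : IsCompact K).exists_isMinOn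
    ⟨1, by norm_num [Complex.mem_reProdIm]⟩
    (hF.norm.mono fun s hs ↦ zero_lt_one.trans_le hs.1.1)
  have hm : 0 < ‖F z‖ := norm_pos_iff.2 (hne z hz.1.1)
  refine ⟨min c (‖F z‖ ^ 4 / 27), by positivity, fun s hs hs4 ↦ ?_⟩
  have : 0 < s.re - 1 := by linarith
  rcases le_or_gt (1 / 2) |s.im| with him | him
  · refine le_trans ?_ (h s hs hs4 him)
    gcongr
    exact min_le_left _ _
  · have hzs : ‖F z‖ ≤ ‖F s‖ := hmin ⟨⟨hs.le, hs4⟩, abs_le.1 him.le⟩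
    calc min c (‖F z‖ ^ 4 / 27) * (s.re - 1) ^ 3 ≤ ‖F z‖ ^ 4 / 27 * 3 ^ 3 := by
          gcongr
          · exact min_le_right _ _
          · linarith
      _ = ‖F z‖ ^ 4 := by ring
      _ ≤ ‖F s‖ ^ 4 := by gcongr
      _ ≤ ‖F s‖ ^ 4 * logSize s :=
          le_mul_of_one_le_right (by positivity) (by linarith [two_le_logSize s])

end ZeroFreeRegion

lemma norm_riemannZeta_le {s : ℂ} (hs : 1 < s.re) (h : 1 ≤ ‖s - 1‖) :
    ‖riemannZeta s‖ ≤ (1 + 4 * Real.exp 2) * logSize s := by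
  have hl := two_le_logSize s
  have hs1 : s ≠ 1 := by rintro rfl; simp at hs
  have hη : 0 < 1 / logSize s := by positivity
  have hζ := norm_zetaOne_le (s := s) (by linarith)
  rw [zetaOne_of_ne_one hs1, norm_mul] at hζ
  have hmul : ‖s - 1‖ * ‖riemannZeta s‖ ≤ ‖s - 1‖ * (1 + 2 * Real.exp 2 * (1 + logSize s)) := by
    linarith
  refine (le_of_mul_le_mul_left hmul (by linarith)).trans ?_
  nlinarith [Real.exp_pos 2]

section DirichletCharacter

variable {N : ℕ} [NeZero N]

lemma norm_LFunctionTrivChar_le {s : ℂ} (hs : 1 < s.re) :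
    ‖DirichletCharacter.LFunctionTrivChar N s‖ ≤ 2 ^ N.primeFactors.card * ‖riemannZeta s‖ := by
  have hs1 : s ≠ 1 := by rintro rfl; simp at hs
  rw [DirichletCharacter.LFunctionTrivChar_eq_mul_riemannZeta hs1, norm_mul, norm_prod]
  gcongr
  rw [← Finset.prod_const]
  refine Finset.prod_le_prod (fun _ _ ↦ norm_nonneg _) fun p hp ↦ ?_
  have hp := Nat.prime_of_mem_primeFactors hp
  refine (norm_sub_le _ _).trans ?_
  rw [norm_one, Complex.norm_natCast_cpow_of_pos hp.pos]
  have : (p : ℝ) ^ (-s).re ≤ 1 := Real.rpow_le_one_of_one_le_of_nonpos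
    (by exact_mod_cast hp.one_le) (by simp; linarith)
  linarith

lemma exists_norm_LFunction_le (ψ : DirichletCharacter ℂ N) :
    ∃ C : ℝ, 0 < C ∧ ∀ s : ℂ, 1 < s.re → 1 ≤ ‖s - 1‖ → ‖ψ.LFunction s‖ ≤ C * logSize s := by
  rcases eq_or_ne ψ 1 with rfl | hψ
  · refine ⟨2 ^ N.primeFactors.card * (1 + 4 * Real.exp 2), by positivity, fun s hs h ↦ ?_⟩
    refine (norm_LFunctionTrivChar_le hs).trans ?_
    rw [mul_assoc]
    gcongr
    exact norm_riemannZeta_le hs h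
  · have hN : (0 : ℝ) < N := by exact_mod_cast NeZero.pos N
    refine ⟨N * (4 * Real.exp 2), by positivity, fun s hs _ ↦ norm_LFunction_le hψ ?_⟩
    linarith [one_div_pos.2 (logSize_pos s)]

variable (N) in
lemma exists_norm_LFunctionTrivChar_mul_le :
    ∃ C : ℝ, 0 < C ∧ ∀ x : ℝ, 1 < x → x ≤ 4 →
      ‖DirichletCharacter.LFunctionTrivChar N x‖ * (x - 1) ≤ C := by
  obtain ⟨C, hC⟩ := (isCompact_Icc (a := (1 : ℝ)) (b := 4)).exists_bound_of_continuousOn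
    ((DirichletCharacter.differentiable_LFunctionTrivChar₁ N).continuous.comp
      Complex.continuous_ofReal).continuousOn
  refine ⟨max C 1, by positivity, fun x hx hx4 ↦ le_trans ?_ (le_max_left _ _)⟩
  have hx1 : (x : ℂ) ≠ 1 := by exact_mod_cast hx.ne'
  have hbound := hC x ⟨hx.le, hx4⟩
  rwa [Function.comp_apply, DirichletCharacter.LFunctionTrivChar₁, Function.update_of_ne hx1,
    norm_mul, ← Complex.ofReal_one, ← Complex.ofReal_sub, Complex.norm_real,
    Real.norm_of_nonneg (by linarith), mul_comm] at hbound

lemma exists_lower_bound_norm_LFunction (χ : DirichletCharacter ℂ N) :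
    ∃ c : ℝ, 0 < c ∧ ∀ s : ℂ, 1 < s.re → s.re ≤ 4 → 1 / 2 ≤ |s.im| →
      c * (s.re - 1) ^ 3 ≤ ‖χ.LFunction s‖ ^ 4 * logSize s := by
  obtain ⟨C, hC0, hC⟩ := exists_norm_LFunctionTrivChar_mul_le N
  obtain ⟨D, hD0, hD⟩ := exists_norm_LFunction_le (χ ^ 2)
  refine ⟨1 / (C ^ 3 * (2 * D)), by positivity, fun s hs hs4 him ↦ ?_⟩
  have := logSize_pos s
  set w : ℂ := (s.re : ℂ) + 2 * Complex.I * (s.im : ℂ) with hw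
  have hwre : w.re = s.re := by simp [hw]
  have hwim : w.im = 2 * s.im := by simp [hw]
  have h341 := DirichletCharacter.norm_LFunction_product_ge_one χ (x := s.re - 1) (by linarith) s.im
  rw [show (1 : ℂ) + ((s.re - 1 : ℝ) : ℂ) = (s.re : ℂ) by push_cast; ring,
    show (s.re : ℂ) + Complex.I * (s.im : ℂ) = s by rw [mul_comm]; exact Complex.re_add_im s,
    ← hw, norm_mul, norm_mul, norm_pow, norm_pow] at h341
  have hw1 : 1 ≤ ‖w - 1‖ := by
    refine le_trans ?_ (Complex.abs_im_le_norm (w - 1))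
    rw [Complex.sub_im, Complex.one_im, hwim, sub_zero, abs_mul, abs_two]
    linarith
  have hws : ‖w‖ ≤ 2 * ‖s‖ := by
    refine le_of_pow_le_pow_left₀ two_ne_zero (by positivity) ?_
    rw [mul_pow, Complex.sq_norm, Complex.sq_norm, Complex.normSq_apply, Complex.normSq_apply,
      hwre, hwim]
    nlinarith [sq_nonneg s.re]
  have hLw : ‖(χ ^ 2).LFunction w‖ ≤ D * (2 * logSize s) :=
    (hD w (by rwa [hwre]) hw1).trans (by gcongr; exact logSize_le_two_mul (by linarith))
  have : 0 ≤ s.re - 1 := by linarith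
  set Z := ‖DirichletCharacter.LFunctionTrivChar N (s.re : ℂ)‖
  rw [one_div_mul_eq_div, div_le_iff₀ (by positivity)]
  calc (s.re - 1) ^ 3
      ≤ (s.re - 1) ^ 3 * (Z ^ 3 * ‖χ.LFunction s‖ ^ 4 * ‖(χ ^ 2).LFunction w‖) :=
        le_mul_of_one_le_right (by positivity) h341
    _ = (Z * (s.re - 1)) ^ 3 * ‖χ.LFunction s‖ ^ 4 * ‖(χ ^ 2).LFunction w‖ := by ring
    _ ≤ C ^ 3 * ‖χ.LFunction s‖ ^ 4 * (D * (2 * logSize s)) := by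
        gcongr
        exact hC _ hs hs4
    _ = _ := by ring

lemma logBounded_logDeriv_LFunction {χ : DirichletCharacter ℂ N} (hχ : χ ≠ 1) :
    LogBounded (logDeriv χ.LFunction) := by
  have hd := DirichletCharacter.differentiable_LFunction hχ
  obtain ⟨c₀, hc₀, h₀⟩ := exists_lower_bound_norm_LFunction χ
  obtain ⟨c, hc, h⟩ := exists_lower_bound_of_ne_zero hd.continuous.continuousOn
    (fun s hs ↦ DirichletCharacter.LFunction_ne_zero_of_one_le_re χ (Or.inl hχ) hs) hc₀ h₀
  have hN : (0 : ℝ) < N := by exact_mod_cast NeZero.pos N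
  exact logBounded_logDeriv hd.differentiableOn (C := N * (4 * Real.exp 2)) (by positivity)
    (fun s hs ↦ norm_LFunction_le hχ hs) hc h

end DirichletCharacter

section ZetaDiv

variable {s : ℂ}

-- `zetaOne` itself grows like `‖s‖ log ‖s‖`; dividing by `s` removes the factor `‖s‖`.
lemma norm_zetaOne_div_le (hs : 1 - 1 / logSize s ≤ s.re) :
    ‖zetaOne s / s‖ ≤ (1 + 12 * Real.exp 2) * logSize s := by
  have hl := two_le_logSize s
  have hs2 : 1 / 2 ≤ ‖s‖ := by linarith [one_div_logSize_le s, Complex.re_le_norm s]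
  have hs1 : ‖s - 1‖ ≤ 3 * ‖s‖ := (norm_sub_le s 1).trans (by rw [norm_one]; linarith)
  rw [norm_div, div_le_iff₀ (by linarith)]
  calc ‖zetaOne s‖ ≤ 1 + ‖s - 1‖ * (2 * Real.exp 2 * (1 + logSize s)) := norm_zetaOne_le hs
    _ ≤ logSize s * ‖s‖ + 3 * ‖s‖ * (2 * Real.exp 2 * (2 * logSize s)) := by
        gcongr
        · nlinarith
        · linarith
    _ = (1 + 12 * Real.exp 2) * logSize s * ‖s‖ := by ring

lemma zetaOne_ne_zero_of_one_le_re (hs : 1 ≤ s.re) : zetaOne s ≠ 0 := by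
  rcases eq_or_ne s 1 with rfl | hs1
  · rw [zetaOne_one]
    exact one_ne_zero
  · rw [zetaOne_of_ne_one hs1]
    exact mul_ne_zero (sub_ne_zero.2 hs1) (riemannZeta_ne_zero_of_one_le_re hs)

lemma norm_riemannZeta_le_mul_norm_zetaOne_div (hs : s ≠ 0) (him : 1 / 2 ≤ |s.im|) :
    ‖riemannZeta s‖ ≤ 3 * ‖zetaOne s / s‖ := by
  have hs1 : s ≠ 1 := by rintro rfl; norm_num at him
  have h1 : 1 / 2 ≤ ‖s - 1‖ := him.trans (by simpa using Complex.abs_im_le_norm (s - 1))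
  have h2 : ‖s‖ ≤ ‖s - 1‖ + 1 := by simpa using norm_add_le (s - 1) 1
  rw [zetaOne_of_ne_one hs1, norm_div, norm_mul, mul_div_assoc', le_div_iff₀ (norm_pos_iff.2 hs)]
  nlinarith [norm_nonneg (riemannZeta s)]

end ZetaDiv

lemma logBounded_logDeriv_zetaOne_div : LogBounded (logDeriv fun s ↦ zetaOne s / s) := by
  have hne0 : ∀ s : ℂ, 0 < s.re → s ≠ 0 := by rintro s hs rfl; simp at hs
  have hd : DifferentiableOn ℂ (fun s ↦ zetaOne s / s) {s | 0 < s.re} :=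
    differentiable_zetaOne.differentiableOn.div differentiableOn_id hne0
  obtain ⟨c₀, hc₀, h₀⟩ := exists_lower_bound_norm_LFunction (1 : DirichletCharacter ℂ 1)
  rw [DirichletCharacter.LFunction_modOne_eq] at h₀
  obtain ⟨c, hc, h⟩ := exists_lower_bound_of_ne_zero hd.continuousOn
    (fun s hs ↦ div_ne_zero (zetaOne_ne_zero_of_one_le_re hs) (hne0 s (by linarith)))
    (by positivity : 0 < c₀ / 3 ^ 4) fun s hs hs4 him ↦ by
      have hl := logSize_pos s
      calc c₀ / 3 ^ 4 * (s.re - 1) ^ 3 = c₀ * (s.re - 1) ^ 3 / 3 ^ 4 := by ring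
        _ ≤ ‖riemannZeta s‖ ^ 4 * logSize s / 3 ^ 4 := by
            gcongr ?_ / _
            exact h₀ s hs hs4 him
        _ ≤ (3 * ‖zetaOne s / s‖) ^ 4 * logSize s / 3 ^ 4 := by
            gcongr
            exact norm_riemannZeta_le_mul_norm_zetaOne_div (hne0 s (by linarith)) him
        _ = ‖zetaOne s / s‖ ^ 4 * logSize s := by ring
  exact logBounded_logDeriv hd (by positivity) (fun s hs ↦ norm_zetaOne_div_le hs) hc h

lemma norm_dslope_zetaOne_le {s : ℂ} (hs : 1 - 1 / logSize s ≤ s.re) (h : 1 ≤ ‖s - 1‖) :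
    ‖dslope zetaOne 1 s‖ ≤ (1 + 4 * Real.exp 2) * logSize s := by
  have hl := two_le_logSize s
  have hs1 : s ≠ 1 := by rintro rfl; norm_num at h
  rw [dslope_of_ne _ hs1, slope_def_field, zetaOne_one, norm_div, div_le_iff₀ (by linarith)]
  calc ‖zetaOne s - 1‖ ≤ ‖zetaOne s‖ + 1 := by simpa using norm_sub_le (zetaOne s) 1
    _ ≤ 1 + ‖s - 1‖ * (2 * Real.exp 2 * (1 + logSize s)) + 1 := by
        gcongr
        exact norm_zetaOne_le hs
    _ = 2 + ‖s - 1‖ * (2 * Real.exp 2 * (1 + logSize s)) := by ring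
    _ ≤ logSize s * ‖s - 1‖ + ‖s - 1‖ * (2 * Real.exp 2 * (2 * logSize s)) := by
        gcongr
        · nlinarith
        · linarith
    _ = (1 + 4 * Real.exp 2) * logSize s * ‖s - 1‖ := by ring

lemma logBounded_dslope_zetaOne : LogBounded (dslope zetaOne 1) := by
  have hd : Differentiable ℂ (dslope zetaOne 1) := by
    rw [← differentiableOn_univ, Complex.differentiableOn_dslope Filter.univ_mem]
    exact differentiable_zetaOne.differentiableOn
  obtain ⟨C, hC⟩ := (isCompact_closedBall (1 : ℂ) 1).exists_bound_of_continuousOn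
    hd.continuous.continuousOn
  refine ⟨1, max C (1 + 4 * Real.exp 2), 1, 1, one_pos, by positivity, hd.differentiableOn,
    fun s hs ↦ ?_⟩
  have hl := two_le_logSize s
  rw [pow_one]
  rcases le_or_gt ‖s - 1‖ 1 with h | h
  · calc ‖dslope zetaOne 1 s‖ ≤ C := hC s (by simpa [dist_eq_norm] using h)
      _ ≤ max C (1 + 4 * Real.exp 2) := le_max_left _ _
      _ ≤ _ := le_mul_of_one_le_right (by positivity) (by linarith)
  · refine (norm_dslope_zetaOne_le (le_re_of_mem_logRegion zero_le_one le_rfl le_rfl hs)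
      h.le).trans ?_
    gcongr
    exact le_max_right _ _

/-! ### Decay of integrals along vertical lines -/

section VerticalLine

open MeasureTheory

lemma norm_le_norm_add_one {s : ℂ} (hs : 0 ≤ s.re) : ‖s‖ ≤ ‖s + 1‖ := by
  refine le_of_sq_le_sq ?_ (norm_nonneg _)
  rw [Complex.sq_norm, Complex.sq_norm, Complex.normSq_apply, Complex.normSq_apply,
    Complex.add_re, Complex.add_im, Complex.one_re, Complex.one_im]
  nlinarith

lemma mul_add_one_ne_zero {s : ℂ} (hs : 0 < s.re) : s * (s + 1) ≠ 0 :=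
  mul_ne_zero (Complex.ne_zero_of_re_pos hs)
    (Complex.ne_zero_of_re_pos (by rw [Complex.add_re, Complex.one_re]; linarith))

lemma norm_sq_le_norm_mul_add_one {s : ℂ} (hs : 0 ≤ s.re) : ‖s‖ ^ 2 ≤ ‖s * (s + 1)‖ := by
  rw [norm_mul, sq]
  gcongr
  exact norm_le_norm_add_one hs

lemma one_add_im_sq_le_norm_sq {s : ℂ} (hs : 1 ≤ s.re) : 1 + s.im ^ 2 ≤ ‖s‖ ^ 2 := by
  rw [Complex.sq_norm, Complex.normSq_apply]
  nlinarith

lemma integrable_one_add_sq_rpow : Integrable fun t : ℝ ↦ (1 + t ^ 2) ^ (-(3 / 4) : ℝ) := by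
  have := integrable_rpow_neg_one_add_norm_sq (E := ℝ) (μ := volume) (r := 3 / 2)
    (by norm_num [Module.finrank_self])
  refine this.congr (Filter.Eventually.of_forall fun t ↦ ?_)
  simp only [Real.norm_eq_abs, sq_abs]
  norm_num

lemma exists_logSize_pow_le (n : ℕ) : ∃ C : ℝ, 0 < C ∧ ∀ s : ℂ, 1 ≤ s.re →
    logSize s ^ n ≤ C * ‖s‖ ^ (1 / 2 : ℝ) := by
  set m : ℝ := 2 * (n + 1) with hm
  have hm0 : 0 < m := by positivity
  refine ⟨m ^ (n + 1) * 9 ^ (1 / 2 : ℝ), by positivity, fun s hs ↦ ?_⟩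
  have hl := two_le_logSize s
  have hlog : logSize s ≤ (9 * ‖s‖) ^ (1 / m) * m := by
    calc logSize s ≤ Real.log (9 * ‖s‖) :=
          Real.log_le_log (by positivity) (by linarith [Complex.re_le_norm s])
      _ ≤ (9 * ‖s‖) ^ (1 / m) / (1 / m) :=
          Real.log_le_rpow_div (by positivity) (one_div_pos.2 hm0)
      _ = _ := by field_simp
  calc logSize s ^ n ≤ logSize s ^ (n + 1) := pow_le_pow_right₀ (by linarith) (by simp)
    _ ≤ ((9 * ‖s‖) ^ (1 / m) * m) ^ (n + 1) := by gcongr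
    _ = m ^ (n + 1) * (9 * ‖s‖) ^ (1 / m * ((n + 1 : ℕ) : ℝ)) := by
      rw [mul_pow, mul_comm, Real.rpow_mul_natCast (by positivity)]
    _ = m ^ (n + 1) * (9 * ‖s‖) ^ (1 / 2 : ℝ) := by
      congr 2
      rw [hm]
      push_cast
      field_simp
    _ = _ := by rw [Real.mul_rpow (by norm_num) (by positivity), mul_assoc]

lemma exists_logSize_pow_div_le (n : ℕ) : ∃ C : ℝ, 0 < C ∧ ∀ s : ℂ, 1 ≤ s.re →
    logSize s ^ n / ‖s‖ ^ 2 ≤ C * (1 + s.im ^ 2) ^ (-(3 / 4) : ℝ) := by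
  obtain ⟨C, hC, hlog⟩ := exists_logSize_pow_le n
  refine ⟨C, hC, fun s hs ↦ ?_⟩
  have hs0 : 0 < ‖s‖ := by linarith [Complex.re_le_norm s]
  calc logSize s ^ n / ‖s‖ ^ 2 ≤ C * ‖s‖ ^ (1 / 2 : ℝ) / ‖s‖ ^ 2 := by
        gcongr
        exact hlog s hs
    _ = C * (‖s‖ ^ 2) ^ (-(3 / 4) : ℝ) := by
        rw [mul_div_assoc, ← Real.rpow_natCast, ← Real.rpow_mul hs0.le, ← Real.rpow_sub hs0]
        norm_num
    _ ≤ _ := by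
        gcongr ?_ * ?_
        exact Real.rpow_le_rpow_of_nonpos (by positivity) (one_add_im_sq_le_norm_sq hs)
          (by norm_num)

/-- A radius small enough for the discs of this radius around points of the strip
`1 ≤ Re s ≤ 2` to be contained in `logRegion κ M`; it is the one used in Cauchy's estimates. -/
def cauchyRadius (κ : ℝ) (M : ℕ) (s : ℂ) : ℝ := κ / (2 ^ (M + 1) * logSize s ^ M)

section CauchyRadius

variable {κ : ℝ} {M : ℕ} {s : ℂ}

lemma cauchyRadius_pos (hκ : 0 < κ) : 0 < cauchyRadius κ M s :=
  div_pos hκ (mul_pos (by positivity) (pow_pos (logSize_pos s) M))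

lemma cauchyRadius_le (hκ : 0 ≤ κ) : cauchyRadius κ M s ≤ κ := by
  have hl : 1 ≤ logSize s := by linarith [two_le_logSize s]
  exact div_le_self hκ (one_le_mul_of_one_le_of_one_le (one_le_pow₀ one_le_two) (one_le_pow₀ hl))

lemma norm_sub_le_of_mem_cauchyDisc (hκ : 0 ≤ κ) (hκ2 : κ ≤ 1 / 2) {w : ℂ}
    (hw : w ∈ Metric.closedBall s (cauchyRadius κ M s)) : ‖w - s‖ ≤ 1 / 2 := by
  rw [Metric.mem_closedBall, dist_eq_norm] at hw
  exact hw.trans ((cauchyRadius_le hκ).trans hκ2)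

lemma closedBall_cauchyRadius_subset (hκ : 0 < κ) (hκ2 : κ ≤ 1 / 2) (h1 : 1 ≤ s.re)
    (h2 : s.re ≤ 2) : Metric.closedBall s (cauchyRadius κ M s) ⊆ logRegion κ M := by
  intro w hw
  have hws := norm_sub_le_of_mem_cauchyDisc hκ.le hκ2 hw
  rw [Metric.mem_closedBall, dist_eq_norm] at hw
  have hls := logSize_pos s
  have hlw := logSize_pos w
  have hlog : logSize w ≤ 2 * logSize s :=
    logSize_le_two_mul (by linarith [norm_le_norm_add_norm_sub' w s, norm_nonneg s])
  have hradius : cauchyRadius κ M s < κ / logSize w ^ M := by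
    refine div_lt_div_of_pos_left hκ (by positivity) ?_
    calc logSize w ^ M ≤ (2 * logSize s) ^ M := by gcongr
      _ = 2 ^ M * logSize s ^ M := mul_pow _ _ _
      _ < 2 ^ (M + 1) * logSize s ^ M := by
        gcongr
        exacts [one_lt_two, M.lt_succ_self]
  have hre := (Complex.abs_re_le_norm (w - s))
  rw [Complex.sub_re] at hre
  obtain ⟨hlower, hupper⟩ := abs_le.1 hre
  exact ⟨by linarith, by linarith⟩

end CauchyRadius

lemma LogBounded.exists_norm_div_mul_add_one_le {G : ℂ → ℂ} (hG : LogBounded G) :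
    ∃ κ C : ℝ, ∃ M B : ℕ, 0 < κ ∧ κ ≤ 1 / 2 ∧ 0 ≤ C ∧
      DifferentiableOn ℂ (fun s ↦ G s / (s * (s + 1))) (logRegion κ M) ∧
      ∀ s ∈ logRegion κ M, ‖G s / (s * (s + 1))‖ ≤ C * logSize s ^ B / ‖s‖ ^ 2 := by
  obtain ⟨κ, C, M, B, hκ, hC, hd, hb⟩ := hG
  have hsub : logRegion (min κ (1 / 2)) (M + 1) ⊆ logRegion κ M :=
    logRegion_subset (min_le_left _ _) (by positivity) M.le_succ
  have hre : ∀ s ∈ logRegion (min κ (1 / 2)) (M + 1), 0 < s.re := fun s hs ↦ by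
    have := le_re_of_mem_logRegion (η := 1 / 2) (by positivity) (min_le_right _ _) (by simp) hs
    have : 1 / 2 / logSize s ≤ 1 / 4 := by
      linarith [one_div_logSize_le s, show 1 / 2 / logSize s = 1 / 2 * (1 / logSize s) by ring]
    linarith
  refine ⟨min κ (1 / 2), C, M + 1, B, by positivity, min_le_right _ _, hC,
    (hd.mono hsub).div (by fun_prop) fun s hs ↦ mul_add_one_ne_zero (hre s hs), fun s hs ↦ ?_⟩
  have hs0 : 0 < ‖s‖ := norm_pos_iff.2 (Complex.ne_zero_of_re_pos (hre s hs))
  have := logSize_pos s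
  rw [norm_div]
  gcongr
  exacts [hb s (hsub hs), norm_sq_le_norm_mul_add_one (hre s hs).le]

section IteratedDeriv

variable {H : ℂ → ℂ} {κ C : ℝ} {M B : ℕ} {s : ℂ}

lemma analyticAt_of_differentiableOn_logRegion (hκ : 0 < κ) (hκ2 : κ ≤ 1 / 2)
    (hd : DifferentiableOn ℂ H (logRegion κ M)) (h1 : 1 ≤ s.re) (h2 : s.re ≤ 2) :
    AnalyticAt ℂ H s :=
  hd.analyticAt ((isOpen_logRegion κ M).mem_nhds (closedBall_cauchyRadius_subset hκ hκ2 h1 h2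
    (Metric.mem_closedBall_self (cauchyRadius_pos hκ).le)))

lemma norm_iteratedDeriv_le_logSize (hκ : 0 < κ) (hκ2 : κ ≤ 1 / 2) (hC : 0 ≤ C)
    (hd : DifferentiableOn ℂ H (logRegion κ M))
    (hb : ∀ s ∈ logRegion κ M, ‖H s‖ ≤ C * logSize s ^ B / ‖s‖ ^ 2) (k : ℕ)
    (h1 : 1 ≤ s.re) (h2 : s.re ≤ 2) :
    ‖iteratedDeriv k H s‖ ≤ k.factorial * (4 * C * 2 ^ B) * (2 ^ (M + 1) / κ) ^ k *
      (logSize s ^ (B + M * k) / ‖s‖ ^ 2) := by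
  have hball := closedBall_cauchyRadius_subset (M := M) hκ hκ2 h1 h2
  have hs1 : 1 ≤ ‖s‖ := h1.trans (Complex.re_le_norm s)
  have hls := logSize_pos s
  have hsphere : ∀ w ∈ Metric.sphere s (cauchyRadius κ M s),
      ‖H w‖ ≤ 4 * C * 2 ^ B * logSize s ^ B / ‖s‖ ^ 2 := by
    intro w hw
    have hws := norm_sub_le_of_mem_cauchyDisc hκ.le hκ2 (Metric.sphere_subset_closedBall hw)
    have hnorm : ‖s‖ / 2 ≤ ‖w‖ := by linarith [norm_le_norm_add_norm_sub w s]
    have hlog : logSize w ≤ 2 * logSize s :=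
      logSize_le_two_mul (by linarith [norm_le_norm_add_norm_sub' w s])
    have := logSize_pos w
    calc ‖H w‖ ≤ C * logSize w ^ B / ‖w‖ ^ 2 := hb w (hball (Metric.sphere_subset_closedBall hw))
      _ ≤ C * (2 * logSize s) ^ B / (‖s‖ / 2) ^ 2 := by gcongr
      _ = _ := by rw [mul_pow]; field_simp; norm_num
  refine (Complex.norm_iteratedDeriv_le_of_forall_mem_sphere_norm_le k (cauchyRadius_pos hκ)
    (hd.mono (Metric.closure_ball_subset_closedBall.trans hball)).diffContOnCl
    hsphere).trans_eq ?_
  rw [cauchyRadius, pow_add (logSize s), pow_mul (logSize s), div_pow, div_pow, mul_pow]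
  field_simp

end IteratedDeriv

lemma LogBounded.analyticAt_div_mul_add_one {G : ℂ → ℂ} (hG : LogBounded G) {s : ℂ}
    (h1 : 1 ≤ s.re) (h2 : s.re ≤ 2) : AnalyticAt ℂ (fun s ↦ G s / (s * (s + 1))) s := by
  obtain ⟨κ, C, M, B, hκ, hκ2, -, hd, -⟩ := hG.exists_norm_div_mul_add_one_le
  exact analyticAt_of_differentiableOn_logRegion hκ hκ2 hd h1 h2

lemma LogBounded.exists_norm_iteratedDeriv_le {G : ℂ → ℂ} (hG : LogBounded G) (k : ℕ) :
    ∃ C : ℝ, 0 ≤ C ∧ ∀ s : ℂ, 1 ≤ s.re → s.re ≤ 2 →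
      ‖iteratedDeriv k (fun s ↦ G s / (s * (s + 1))) s‖ ≤
        C * (1 + s.im ^ 2) ^ (-(3 / 4) : ℝ) := by
  obtain ⟨κ, C, M, B, hκ, hκ2, hC, hd, hb⟩ := hG.exists_norm_div_mul_add_one_le
  obtain ⟨C', hC', hlog⟩ := exists_logSize_pow_div_le (B + M * k)
  refine ⟨k.factorial * (4 * C * 2 ^ B) * (2 ^ (M + 1) / κ) ^ k * C', by positivity,
    fun s h1 h2 ↦ ?_⟩
  rw [mul_assoc _ C']
  exact (norm_iteratedDeriv_le_logSize hκ hκ2 hC hd hb k h1 h2).trans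
    (by gcongr; exact hlog s h1)

lemma hasDerivAt_verticalLine (c : ℝ) (t : ℝ) :
    HasDerivAt (fun t : ℝ ↦ (c : ℂ) + t * Complex.I) Complex.I t := by
  simpa using ((hasDerivAt_id t).ofReal_comp.mul_const Complex.I).const_add (c : ℂ)

lemma iteratedDeriv_comp_verticalLine {H : ℂ → ℂ} {c : ℝ}
    (hH : ∀ t : ℝ, AnalyticAt ℂ H (c + t * Complex.I)) (k : ℕ) :
    iteratedDeriv k (fun t : ℝ ↦ H (c + t * Complex.I)) =
      fun t : ℝ ↦ Complex.I ^ k * iteratedDeriv k H (c + t * Complex.I) := by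
  induction k with
  | zero => simp
  | succ k ih =>
    ext t
    have hderiv : HasDerivAt (iteratedDeriv k H) (iteratedDeriv (k + 1) H (c + t * Complex.I))
        (c + t * Complex.I) := by
      rw [iteratedDeriv_succ, iteratedDeriv_eq_iterate]
      exact ((hH t).iterated_deriv k).differentiableAt.hasDerivAt
    rw [iteratedDeriv_succ, ih]
    refine ((hderiv.comp t (hasDerivAt_verticalLine c t)).const_mul (Complex.I ^ k)).deriv.trans ?_
    ring

lemma contDiff_comp_verticalLine {H : ℂ → ℂ} {c : ℝ}
    (hH : ∀ t : ℝ, AnalyticAt ℂ H (c + t * Complex.I)) (n : ℕ) :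
    ContDiff ℝ n fun t : ℝ ↦ H (c + t * Complex.I) := by
  refine contDiff_iff_contDiffAt.2 fun t ↦ ?_
  have hline : ContDiffAt ℝ n (fun t : ℝ ↦ (c : ℂ) + t * Complex.I) t :=
    (contDiff_const.add (Complex.ofRealCLM.contDiff.mul contDiff_const)).contDiffAt
  exact ((hH t).contDiffAt.restrict_scalars ℝ).comp t hline

lemma norm_integral_mul_exp_le {f : ℝ → ℂ} {k : ℕ} (hf : ContDiff ℝ k f)
    (hint : ∀ j ≤ k, Integrable (iteratedDeriv j f)) {y : ℝ} (hy : 0 < y) :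
    ‖∫ t : ℝ, f t * Complex.exp (t * y * Complex.I)‖ ≤
      (∫ t : ℝ, ‖iteratedDeriv k f t‖) / y ^ k := by
  set w : ℝ := -y / (2 * Real.pi) with hw
  have hpi := Real.pi_pos
  have hfourier : FourierTransform.fourier f w =
      ∫ t : ℝ, f t * Complex.exp (t * y * Complex.I) := by
    rw [Real.fourier_real_eq_integral_exp_smul]
    congr 1 with t
    rw [smul_eq_mul, mul_comm, hw,
      show -2 * Real.pi * t * (-y / (2 * Real.pi)) = t * y by field_simp, Complex.ofReal_mul]
  have hnorm : ‖(2 * Real.pi * Complex.I * w : ℂ)‖ = y := by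
    rw [hw, norm_mul, norm_mul, norm_mul, Complex.norm_I, Complex.norm_real, Complex.norm_real,
      Real.norm_of_nonneg hpi.le, Complex.norm_two, norm_div, norm_neg,
      Real.norm_of_nonneg hy.le, Real.norm_of_nonneg (by positivity)]
    field_simp
  rw [le_div_iff₀ (by positivity), ← hfourier]
  calc ‖FourierTransform.fourier f w‖ * y ^ k
      = ‖FourierTransform.fourier (iteratedDeriv k f) w‖ := by
        rw [Real.fourier_iteratedDeriv (N := k) (by exact_mod_cast hf)
          (fun n hn ↦ hint n (by exact_mod_cast hn)) le_rfl, norm_smul, norm_pow, hnorm, mul_comm]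
    _ ≤ _ := VectorFourier.norm_fourierIntegral_le_integral_norm _ _ _ _ _

lemma LogBounded.exists_norm_integral_le {G : ℂ → ℂ} (hG : LogBounded G) (k : ℕ) :
    ∃ C : ℝ, 0 ≤ C ∧ ∀ c : ℝ, 1 ≤ c → c ≤ 2 → ∀ y : ℝ, 0 < y →
      ‖∫ t : ℝ, G (c + t * Complex.I) / ((c + t * Complex.I) * (c + t * Complex.I + 1)) *
        Complex.exp (t * y * Complex.I)‖ ≤ C / y ^ k := by
  choose D hD hbound using hG.exists_norm_iteratedDeriv_le
  refine ⟨∫ t : ℝ, D k * (1 + t ^ 2) ^ (-(3 / 4) : ℝ),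
    integral_nonneg fun t ↦ mul_nonneg (hD k) (by positivity), fun c hc1 hc2 y hy ↦ ?_⟩
  set H : ℂ → ℂ := fun s ↦ G s / (s * (s + 1))
  have hH (t : ℝ) : AnalyticAt ℂ H (c + t * Complex.I) :=
    hG.analyticAt_div_mul_add_one (by simpa using hc1) (by simpa using hc2)
  have hle (j : ℕ) (t : ℝ) : ‖iteratedDeriv j (fun t : ℝ ↦ H (c + t * Complex.I)) t‖ ≤
      D j * (1 + t ^ 2) ^ (-(3 / 4) : ℝ) := by
    rw [iteratedDeriv_comp_verticalLine hH, norm_mul, norm_pow, Complex.norm_I, one_pow, one_mul]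
    simpa using hbound j (c + t * Complex.I) (by simpa using hc1) (by simpa using hc2)
  have hint (j : ℕ) : Integrable (iteratedDeriv j fun t : ℝ ↦ H (c + t * Complex.I)) :=
    (integrable_one_add_sq_rpow.const_mul (D j)).mono'
      ((contDiff_comp_verticalLine hH j).continuous_iteratedDeriv j le_rfl).aestronglyMeasurable
      (Filter.Eventually.of_forall (hle j))
  refine (norm_integral_mul_exp_le (contDiff_comp_verticalLine hH k)
    (fun j _ ↦ hint j) hy).trans ?_
  exact div_le_div_of_nonneg_right (integral_mono (hint k).norm
    (integrable_one_add_sq_rpow.const_mul (D k)) (hle k)) (by positivity)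

end VerticalLine

/-! ### The smoothed Perron formula -/

section Perron

open MeasureTheory

lemma integrable_perronKernel {c : ℝ} (hc : 1 ≤ c) :
    Integrable fun t : ℝ ↦ 1 / (((c : ℂ) + t * Complex.I) * (c + t * Complex.I + 1)) := by
  have hre (t : ℝ) : ((c : ℂ) + t * Complex.I).re = c := by simp
  refine integrable_inv_one_add_sq.mono' (Continuous.aestronglyMeasurable
    (continuous_const.div (by fun_prop) fun t ↦ mul_add_one_ne_zero (by rw [hre]; linarith)))
    (Filter.Eventually.of_forall fun t ↦ ?_)
  rw [norm_div, norm_one, one_div]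
  gcongr
  calc 1 + t ^ 2 ≤ ‖(c : ℂ) + t * Complex.I‖ ^ 2 := by
        simpa using one_add_im_sq_le_norm_sq (s := c + t * Complex.I) (by rwa [hre])
    _ ≤ _ := norm_sq_le_norm_mul_add_one (by rw [hre]; linarith)

lemma hasMellin_max_one_sub {s : ℂ} (hs : 0 < s.re) :
    HasMellin (fun t : ℝ ↦ ((max (1 - t) 0 : ℝ) : ℂ)) s (1 / (s * (s + 1))) := by
  have h1 := hasMellin_one_Ioc hs
  have h2 := hasMellin_cpow_Ioc 1 (s := s) (by simp; linarith)
  have hsub := hasMellin_sub h1.1 h2.1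
  rw [h1.2, h2.2] at hsub
  have heq : Set.EqOn (fun t : ℝ ↦ (t : ℂ) ^ (s - 1) •
      (Set.indicator (Set.Ioc 0 1) (fun _ ↦ 1 : ℝ → ℂ) t -
        Set.indicator (Set.Ioc 0 1) (fun t ↦ (t : ℂ) ^ (1 : ℂ) : ℝ → ℂ) t))
      (fun t : ℝ ↦ (t : ℂ) ^ (s - 1) • ((max (1 - t) 0 : ℝ) : ℂ)) (Set.Ioi 0) := by
    intro t ht
    dsimp only
    congr 1
    by_cases h : t ≤ 1
    · have ht' : t ∈ Set.Ioc (0 : ℝ) 1 := ⟨ht, h⟩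
      rw [Set.indicator_of_mem ht', Set.indicator_of_mem ht', Complex.cpow_one,
        max_eq_left (by linarith)]
      push_cast
      rfl
    · have ht' : t ∉ Set.Ioc (0 : ℝ) 1 := fun h' ↦ h h'.2
      rw [Set.indicator_of_notMem ht', Set.indicator_of_notMem ht', max_eq_right (by linarith),
        sub_zero, Complex.ofReal_zero]
  refine ⟨hsub.1.congr_fun heq measurableSet_Ioi, ?_⟩
  rw [mellin, ← setIntegral_congr_fun measurableSet_Ioi heq]
  refine hsub.2.trans ?_
  have h0 : s ≠ 0 := Complex.ne_zero_of_re_pos hs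
  have h0' : s + 1 ≠ 0 := right_ne_zero_of_mul (mul_add_one_ne_zero hs)
  field_simp
  ring

lemma perron_formula {c : ℝ} (hc : 1 ≤ c) {u : ℝ} (hu : 0 < u) :
    ∫ t : ℝ, (u : ℂ) ^ (-(c + t * Complex.I)) *
      (1 / ((c + t * Complex.I) * (c + t * Complex.I + 1))) =
    2 * Real.pi * ((max (1 - u) 0 : ℝ) : ℂ) := by
  set f : ℝ → ℂ := fun t ↦ ((max (1 - t) 0 : ℝ) : ℂ)
  have hf : Continuous f := by fun_prop
  have hmellin (t : ℝ) : mellin f (c + t * Complex.I) =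
      1 / ((c + t * Complex.I) * (c + t * Complex.I + 1)) :=
    (hasMellin_max_one_sub (by simp; linarith)).2
  have hvert : Complex.VerticalIntegrable (mellin f) c :=
    (integrable_perronKernel hc).congr (Filter.Eventually.of_forall fun t ↦ (hmellin t).symm)
  have hinv := mellinInv_mellin_eq c f hu
    (hasMellin_max_one_sub (by rw [Complex.ofReal_re]; linarith)).1 hvert hf.continuousAt
  have hpi : (Real.pi : ℂ) ≠ 0 := by exact_mod_cast Real.pi_ne_zero
  change _ = 2 * Real.pi * f u
  rw [← hinv, mellinInv, Complex.real_smul]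
  simp only [smul_eq_mul, hmellin]
  push_cast
  rw [← mul_assoc, mul_one_div_cancel (mul_ne_zero two_ne_zero hpi), one_mul]

section DirichletSeries

variable {b : ℕ → ℂ} {c x : ℝ}

lemma term_mul_cpow_eq (hx : 0 < x) {n : ℕ} (hn : n ≠ 0) (s : ℂ) :
    LSeries.term b s n * (x : ℂ) ^ s = b n * ((n / x : ℝ) : ℂ) ^ (-s) := by
  rw [LSeries.term_of_ne_zero hn, Complex.cpow_neg, Complex.ofReal_div,
    Complex.div_cpow_ofReal_nonneg n.cast_nonneg hx.le, inv_div, Complex.ofReal_natCast]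
  ring

lemma norm_term_mul_cpow_mul_perronKernel (hx : 0 < x) (n : ℕ) (t : ℝ) :
    ‖LSeries.term b (c + t * Complex.I) n * (x : ℂ) ^ (c + t * Complex.I) *
      (1 / ((c + t * Complex.I) * (c + t * Complex.I + 1)))‖ =
    ‖LSeries.term b c n‖ * x ^ c *
      ‖1 / (((c : ℂ) + t * Complex.I) * (c + t * Complex.I + 1))‖ := by
  rw [norm_mul, norm_mul, Complex.norm_cpow_eq_rpow_re_of_pos hx, LSeries.norm_term_eq,
    LSeries.norm_term_eq]
  simp

lemma integrable_term_mul_cpow_mul_perronKernel (hc : 1 ≤ c) (hx : 0 < x) (n : ℕ) :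
    Integrable fun t : ℝ ↦ LSeries.term b (c + t * Complex.I) n *
      (x : ℂ) ^ (c + t * Complex.I) * (1 / ((c + t * Complex.I) * (c + t * Complex.I + 1))) := by
  have hterm : Continuous fun t : ℝ ↦ LSeries.term b (c + t * Complex.I) n := by
    by_cases hn : n = 0
    · simp only [hn, LSeries.term_zero]
      exact continuous_const
    · have hn' : (n : ℂ) ≠ 0 := by exact_mod_cast hn
      simp only [LSeries.term_of_ne_zero hn]
      exact continuous_const.div (Continuous.const_cpow (by fun_prop) (Or.inl hn'))
        fun t ↦ Complex.cpow_ne_zero_iff.2 (Or.inl hn')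
  have hpow : Continuous fun t : ℝ ↦ (x : ℂ) ^ (c + t * Complex.I) :=
    Continuous.const_cpow (by fun_prop) (Or.inl (by exact_mod_cast hx.ne'))
  exact ((integrable_perronKernel hc).norm.const_mul (‖LSeries.term b c n‖ * x ^ c)).mono'
    ((hterm.mul hpow).aestronglyMeasurable.mul (integrable_perronKernel hc).1)
    (Filter.Eventually.of_forall fun t ↦ (norm_term_mul_cpow_mul_perronKernel hx n t).le)

lemma integral_term_mul_cpow_mul_perronKernel (hc : 1 ≤ c) (hx : 0 < x) {n : ℕ} (hn : n ≠ 0) :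
    ∫ t : ℝ, LSeries.term b (c + t * Complex.I) n * (x : ℂ) ^ (c + t * Complex.I) *
      (1 / ((c + t * Complex.I) * (c + t * Complex.I + 1))) =
    2 * Real.pi * (b n * ((max (1 - n / x) 0 : ℝ) : ℂ)) := by
  have hn0 : (0 : ℝ) < n := by exact_mod_cast Nat.pos_of_ne_zero hn
  simp_rw [term_mul_cpow_eq hx hn, mul_assoc, integral_const_mul,
    perron_formula hc (div_pos hn0 hx)]
  ring

lemma integral_LSeries_mul_cpow_mul_perronKernel (hc : 1 ≤ c) (hx : 0 < x)
    (hb : LSeriesSummable b c) :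
    ∫ t : ℝ, LSeries b (c + t * Complex.I) * (x : ℂ) ^ (c + t * Complex.I) *
      (1 / ((c + t * Complex.I) * (c + t * Complex.I + 1))) =
    2 * Real.pi * ∑ n ∈ Finset.Icc 1 ⌊x⌋₊, b n * (1 - n / x) := by
  set F : ℕ → ℝ → ℂ := fun n t ↦ LSeries.term b (c + t * Complex.I) n *
    (x : ℂ) ^ (c + t * Complex.I) * (1 / ((c + t * Complex.I) * (c + t * Complex.I + 1)))
    with hF
  have hsum : Summable fun n ↦ ∫ t, ‖F n t‖ := by
    simp_rw [hF, norm_term_mul_cpow_mul_perronKernel hx, integral_const_mul]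
    exact (hb.norm.mul_right _).mul_right _
  have hswap := hasSum_integral_of_summable_integral_norm
    (integrable_term_mul_cpow_mul_perronKernel hc hx) hsum
  have hzero : ∀ n ∉ Finset.Icc 1 ⌊x⌋₊, ∫ t, F n t = 0 := by
    intro n hn
    by_cases h0 : n = 0
    · simp [hF, h0]
    · rw [Finset.mem_Icc, not_and, not_le] at hn
      have hxn : x < n := (Nat.floor_lt hx.le).1 (hn (Nat.one_le_iff_ne_zero.2 h0))
      rw [integral_term_mul_cpow_mul_perronKernel hc hx h0, max_eq_right, Complex.ofReal_zero,
        mul_zero, mul_zero]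
      rw [sub_nonpos, one_le_div hx]
      exact hxn.le
  calc _ = ∫ t, ∑' n, F n t := by simp_rw [hF, tsum_mul_right, LSeries]
    _ = ∑ n ∈ Finset.Icc 1 ⌊x⌋₊, ∫ t, F n t :=
      hswap.unique (hasSum_sum_of_ne_finset_zero hzero)
    _ = _ := by
      rw [Finset.mul_sum]
      refine Finset.sum_congr rfl fun n hn ↦ ?_
      obtain ⟨hn1, hnx⟩ := Finset.mem_Icc.1 hn
      rw [integral_term_mul_cpow_mul_perronKernel hc hx (by omega), max_eq_left]
      · push_cast
        rfl
      · rw [sub_nonneg, div_le_one hx]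
        exact (Nat.le_floor_iff hx.le).1 hnx

end DirichletSeries

lemma cpow_one_add_one_div_log_add {x : ℝ} (hx : 1 < x) (t : ℝ) :
    (x : ℂ) ^ (((1 + 1 / Real.log x : ℝ) : ℂ) + t * Complex.I) =
      (x * Real.exp 1 : ℝ) * Complex.exp (t * Real.log x * Complex.I) := by
  have hx0 : 0 < x := by linarith
  have hlog : (Real.log x : ℂ) ≠ 0 := by exact_mod_cast (Real.log_pos hx).ne'
  have hexp : x * Real.exp 1 = Real.exp (Real.log x + 1) := by
    rw [Real.exp_add, Real.exp_log hx0]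
  rw [hexp, Complex.cpow_def_of_ne_zero (by exact_mod_cast hx0.ne'),
    ← Complex.ofReal_log hx0.le, Complex.ofReal_exp, ← Complex.exp_add]
  congr 1
  push_cast
  field_simp

lemma one_lt_log_of_three_le {x : ℝ} (hx : 3 ≤ x) : 1 < Real.log x := by
  rw [Real.lt_log_iff_exp_lt (by linarith)]
  linarith [Real.exp_one_lt_d9]

lemma LogBounded.exists_norm_sum_le {G : ℂ → ℂ} (hG : LogBounded G) {b : ℕ → ℂ}
    (hb : ∀ s : ℂ, 1 < s.re → LSeriesSummable b s)
    (hbG : ∀ s : ℂ, 1 < s.re → G s = LSeries b s) (k : ℕ) :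
    ∃ C : ℝ, 0 ≤ C ∧ ∀ x : ℝ, 3 ≤ x →
      ‖∑ n ∈ Finset.Icc 1 ⌊x⌋₊, b n * (1 - n / x)‖ ≤ C * x / Real.log x ^ k := by
  obtain ⟨C, hC, hint⟩ := hG.exists_norm_integral_le k
  refine ⟨C * Real.exp 1, by positivity, fun x hx ↦ ?_⟩
  have hx0 : 0 < x := by linarith
  have hlog := one_lt_log_of_three_le hx
  set c := 1 + 1 / Real.log x with hc
  have hc1 : 1 < c := lt_add_of_pos_right 1 (by positivity)
  have hc2 : c ≤ 2 := by
    have : 1 / Real.log x ≤ 1 := (div_le_one (by positivity)).2 hlog.le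
    linarith
  have hperron : 2 * Real.pi * ∑ n ∈ Finset.Icc 1 ⌊x⌋₊, b n * (1 - n / x) =
      (x * Real.exp 1 : ℝ) * ∫ t : ℝ, G (c + t * Complex.I) /
        ((c + t * Complex.I) * (c + t * Complex.I + 1)) *
          Complex.exp (t * Real.log x * Complex.I) := by
    rw [← integral_LSeries_mul_cpow_mul_perronKernel hc1.le hx0 (hb c (by simpa using hc1)),
      ← integral_const_mul]
    congr 1 with t
    rw [hbG _ (by simpa using hc1), hc, cpow_one_add_one_div_log_add (by linarith)]
    ring
  have hnorm := congrArg norm hperron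
  rw [norm_mul, norm_mul, norm_mul, Complex.norm_two, Complex.norm_real, Complex.norm_real,
    Real.norm_of_nonneg Real.pi_pos.le, Real.norm_of_nonneg (by positivity)] at hnorm
  calc ‖∑ n ∈ Finset.Icc 1 ⌊x⌋₊, b n * (1 - n / x)‖
      ≤ 2 * Real.pi * ‖∑ n ∈ Finset.Icc 1 ⌊x⌋₊, b n * (1 - n / x)‖ :=
        le_mul_of_one_le_left (norm_nonneg _) (by linarith [Real.pi_gt_three])
    _ ≤ x * Real.exp 1 * (C / Real.log x ^ k) := by
        rw [hnorm]
        gcongr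
        exact hint c hc1.le hc2 _ (by linarith)
    _ = _ := by ring

end Perron

/-! ### Removal of the smooth weight -/

lemma half_log_le_log {x y : ℝ} (hx : 4 ≤ x) (hxy : x / 2 ≤ y) : Real.log x / 2 ≤ Real.log y := by
  have h4 : Real.log (2 ^ 2) ≤ Real.log x := Real.log_le_log (by norm_num) (by linarith)
  have hy : Real.log (x / 2) ≤ Real.log y := Real.log_le_log (by linarith) hxy
  rw [Real.log_pow, Nat.cast_ofNat] at h4
  rw [Real.log_div (by linarith) two_ne_zero] at hy
  linarith

lemma exists_log_pow_le (k : ℕ) {ε : ℝ} (hε : 0 < ε) :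
    ∃ C : ℝ, 0 < C ∧ ∀ x : ℝ, 1 ≤ x → Real.log x ^ k ≤ C * x ^ ε := by
  set m : ℝ := (k + 1) / ε with hm
  have hm0 : 0 < m := by positivity
  refine ⟨m ^ k, by positivity, fun x hx ↦ ?_⟩
  have hlog : Real.log x ≤ m * x ^ (1 / m) := by
    refine (Real.log_le_rpow_div (by linarith) (one_div_pos.2 hm0)).trans_eq ?_
    field_simp
  calc Real.log x ^ k ≤ (m * x ^ (1 / m)) ^ k := by
        gcongr
        exact Real.log_nonneg hx
    _ = m ^ k * x ^ (1 / m * k) := by rw [mul_pow, ← Real.rpow_mul_natCast (by linarith)]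
    _ ≤ m ^ k * x ^ ε := by
        gcongr
        rw [hm, one_div_div, div_mul_eq_mul_div, div_le_iff₀ (by positivity)]
        nlinarith

/-- The Riesz sum of order one: the partial sum of `a` up to `x` with weight `x - n`, which
equals the integral of the partial sums over `[0, x]`. -/
def rieszSum (a : ℕ → ℝ) (x : ℝ) : ℝ := ∑ n ∈ Finset.Icc 1 ⌊x⌋₊, a n * (x - n)

lemma sum_Icc_natCast_eq (N : ℕ) : ∑ n ∈ Finset.Icc 1 N, (n : ℝ) = N * (N + 1) / 2 := by
  induction N with
  | zero => simp
  | succ N ih =>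
    rw [Finset.sum_Icc_succ_top (by omega), ih]
    push_cast
    ring

lemma abs_rieszSum_one_sub_le {x : ℝ} (hx : 0 ≤ x) : |rieszSum 1 x - x ^ 2 / 2| ≤ x := by
  have hsum : rieszSum 1 x = x * ⌊x⌋₊ - ⌊x⌋₊ * (⌊x⌋₊ + 1) / 2 := by
    simp only [rieszSum, Pi.one_apply, one_mul]
    rw [Finset.sum_sub_distrib, sum_Icc_natCast_eq, Finset.sum_const, Nat.card_Icc, nsmul_eq_mul,
      Nat.add_sub_cancel, mul_comm]
  have hfloor := Nat.floor_le hx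
  have hfloor' := Nat.lt_floor_add_one x
  rw [hsum, abs_le]
  constructor <;> nlinarith

section Smoothing

variable {a : ℕ → ℝ}

lemma abs_rieszSum_sub_le {C₀ C₁ x : ℝ} {k : ℕ} (hx : 1 < x)
    (h : |∑ n ∈ Finset.Icc 1 ⌊x⌋₊, (a n - 1) * (1 - n / x)| ≤ C₀ * x / Real.log x ^ k)
    (hlog : Real.log x ^ k ≤ C₁ * x) :
    |rieszSum a x - x ^ 2 / 2| ≤ (C₀ + C₁) * x ^ 2 / Real.log x ^ k := by
  have hx0 : 0 < x := by linarith
  have hl := Real.log_pos hx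
  have hdecomp : rieszSum a x =
      x * ∑ n ∈ Finset.Icc 1 ⌊x⌋₊, (a n - 1) * (1 - n / x) + rieszSum 1 x := by
    rw [rieszSum, rieszSum, Finset.mul_sum, ← Finset.sum_add_distrib]
    refine Finset.sum_congr rfl fun n _ ↦ ?_
    rw [Pi.one_apply]
    field_simp
    ring
  have hone : x ≤ C₁ * x ^ 2 / Real.log x ^ k := by
    rw [le_div_iff₀ (by positivity)]
    nlinarith
  calc |rieszSum a x - x ^ 2 / 2|
      ≤ |x * ∑ n ∈ Finset.Icc 1 ⌊x⌋₊, (a n - 1) * (1 - n / x)| + |rieszSum 1 x - x ^ 2 / 2| := by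
        rw [hdecomp, add_sub_assoc]
        exact abs_add_le _ _
    _ ≤ x * (C₀ * x / Real.log x ^ k) + C₁ * x ^ 2 / Real.log x ^ k := by
        rw [abs_mul, abs_of_pos hx0]
        gcongr
        exact (abs_rieszSum_one_sub_le hx0.le).trans hone
    _ = _ := by ring

lemma sum_mul_sub_le_rieszSum_sub (ha : ∀ n, 0 ≤ a n) {x y : ℝ} (hxy : x ≤ y) (hy : 0 ≤ y) :
    (∑ n ∈ Finset.Icc 1 ⌊x⌋₊, a n) * (y - x) ≤ rieszSum a y - rieszSum a x := by
  have hmono : ∑ n ∈ Finset.Icc 1 ⌊x⌋₊, a n * (y - n) ≤ rieszSum a y :=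
    Finset.sum_le_sum_of_subset_of_nonneg
      (Finset.Icc_subset_Icc_right (Nat.floor_le_floor hxy)) fun n hn _ ↦ mul_nonneg (ha n)
        (sub_nonneg.2 ((Nat.le_floor_iff hy).1 (Finset.mem_Icc.1 hn).2))
  have hsplit : ∑ n ∈ Finset.Icc 1 ⌊x⌋₊, a n * (y - n) =
      rieszSum a x + (∑ n ∈ Finset.Icc 1 ⌊x⌋₊, a n) * (y - x) := by
    rw [rieszSum, Finset.sum_mul, ← Finset.sum_add_distrib]
    exact Finset.sum_congr rfl fun n _ ↦ by ring
  linarith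

lemma rieszSum_sub_le_sum_mul (ha : ∀ n, 0 ≤ a n) {x y : ℝ} (hxy : x ≤ y) :
    rieszSum a y - rieszSum a x ≤ (∑ n ∈ Finset.Icc 1 ⌊y⌋₊, a n) * (y - x) := by
  have hmono : ∑ n ∈ Finset.Icc 1 ⌊y⌋₊, a n * (x - n) ≤ rieszSum a x := by
    have hsubset := Finset.Icc_subset_Icc_right (a := 1) (Nat.floor_le_floor hxy)
    rw [rieszSum, ← Finset.sum_sdiff hsubset]
    refine add_le_of_nonpos_left (Finset.sum_nonpos fun n hn ↦
      mul_nonpos_of_nonneg_of_nonpos (ha n) (sub_nonpos.2 ?_))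
    rw [Finset.mem_sdiff, Finset.mem_Icc, Finset.mem_Icc, not_and, not_le] at hn
    exact (Nat.lt_of_floor_lt (hn.2 hn.1.1)).le
  have hsplit : rieszSum a y =
      ∑ n ∈ Finset.Icc 1 ⌊y⌋₊, a n * (x - n) + (∑ n ∈ Finset.Icc 1 ⌊y⌋₊, a n) * (y - x) := by
    rw [rieszSum, Finset.sum_mul, ← Finset.sum_add_distrib]
    exact Finset.sum_congr rfl fun n _ ↦ by ring
  linarith

lemma abs_sum_sub_mul_le (ha : ∀ n, 0 ≤ a n) {x h E : ℝ} (hx : 0 ≤ x) (hh : 0 ≤ h)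
    (hE : ∀ y ∈ Set.Icc (x - h) (x + h), |rieszSum a y - y ^ 2 / 2| ≤ E) :
    |∑ n ∈ Finset.Icc 1 ⌊x⌋₊, a n - x| * h ≤ h ^ 2 / 2 + 2 * E := by
  have hupper := sum_mul_sub_le_rieszSum_sub ha (x := x) (y := x + h) (by linarith) (by linarith)
  have hlower := rieszSum_sub_le_sum_mul ha (x := x - h) (y := x) (by linarith)
  have hE₀ := abs_le.1 (hE x ⟨by linarith, by linarith⟩)
  have hE₁ := abs_le.1 (hE (x + h) ⟨by linarith, le_rfl⟩)
  have hE₂ := abs_le.1 (hE (x - h) ⟨le_rfl, by linarith⟩)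
  rw [← abs_of_nonneg hh, ← abs_mul, abs_of_nonneg hh, abs_le]
  constructor <;> nlinarith

-- The window `h = x / (2 (log x) ^ j)` balances the main error `h / 2` against `E / h`.
lemma exists_abs_sum_sub_le (ha : ∀ n, 0 ≤ a n)
    (h : ∀ k : ℕ, ∃ C : ℝ, 0 ≤ C ∧ ∀ x : ℝ, 3 ≤ x →
      |∑ n ∈ Finset.Icc 1 ⌊x⌋₊, (a n - 1) * (1 - n / x)| ≤ C * x / Real.log x ^ k) (j : ℕ) :
    ∃ C : ℝ, 0 < C ∧ ∀ x : ℝ, 6 ≤ x →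
      |∑ n ∈ Finset.Icc 1 ⌊x⌋₊, a n - x| ≤ C * x / Real.log x ^ j := by
  obtain ⟨C₀, hC₀, h₀⟩ := h (2 * j)
  obtain ⟨C₁, hC₁, h₁⟩ := exists_log_pow_le (2 * j) one_pos
  set C := C₀ + C₁
  refine ⟨1 / 4 + 16 * C * 4 ^ j, by positivity, fun x hx ↦ ?_⟩
  set L := Real.log x
  have hL1 : 1 < L := one_lt_log_of_three_le (by linarith)
  set w := x / (2 * L ^ j) with hw
  have hw0 : 0 < w := by positivity
  have hwx : w ≤ x / 2 := by
    have : 1 ≤ L ^ j := one_le_pow₀ hL1.le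
    rw [hw]
    gcongr
    linarith
  have hriesz : ∀ y ∈ Set.Icc (x - w) (x + w),
      |rieszSum a y - y ^ 2 / 2| ≤ 16 * C * 4 ^ j * w ^ 2 := by
    rintro y ⟨hy1, hy2⟩
    have hy : 3 ≤ y := by linarith
    have hlog : L / 2 ≤ Real.log y := half_log_le_log (by linarith) (by linarith)
    calc |rieszSum a y - y ^ 2 / 2| ≤ C * y ^ 2 / Real.log y ^ (2 * j) :=
          abs_rieszSum_sub_le (by linarith) (h₀ y hy) (by simpa using h₁ y (by linarith))
      _ ≤ C * (2 * x) ^ 2 / (L / 2) ^ (2 * j) := by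
          gcongr
          linarith
      _ = _ := by
          rw [hw, show (4 : ℝ) = 2 ^ 2 by norm_num, ← pow_mul, div_pow, pow_mul']
          field_simp
          ring
  refine le_of_mul_le_mul_right
    ((abs_sum_sub_mul_le ha (by linarith) hw0.le hriesz).trans_eq ?_) hw0
  rw [hw]
  field_simp
  ring

end Smoothing

/-! ### The prime number theorem for `Λ (1 + χ)` -/

lemma logBounded_one_div : LogBounded fun s ↦ 1 / s := by
  have hre : ∀ s ∈ logRegion (1 / 2) 0, 1 / 2 < s.re := fun s hs ↦ by
    have := hs.1
    norm_num at this
    linarith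
  refine ⟨1 / 2, 2, 0, 0, by norm_num, by norm_num,
    (differentiableOn_const 1).div differentiableOn_id fun s hs ↦
      Complex.ne_zero_of_re_pos (by linarith [hre s hs]), fun s hs ↦ ?_⟩
  have hnorm := (hre s hs).le.trans (Complex.re_le_norm s)
  rw [norm_div, norm_one, pow_zero, mul_one, div_le_iff₀ (by linarith)]
  linarith

lemma logDeriv_zetaOne_div {s : ℂ} (hs : 1 < s.re) : logDeriv (fun s ↦ zetaOne s / s) s =
    1 / (s - 1) + deriv riemannZeta s / riemannZeta s - 1 / s := by
  have hs1 : s ≠ 1 := by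
    rintro rfl
    simp at hs
  have hs0 : s ≠ 0 := Complex.ne_zero_of_re_pos (by linarith)
  have hζ : riemannZeta s ≠ 0 := riemannZeta_ne_zero_of_one_le_re hs.le
  have heq : (fun s ↦ zetaOne s / s) =ᶠ[nhds s] fun s ↦ (s - 1) * riemannZeta s / s := by
    filter_upwards [isOpen_ne.mem_nhds hs1] with w hw
    rw [zetaOne_of_ne_one hw]
  have hdiff := differentiableAt_riemannZeta hs1
  rw [logDeriv_apply, heq.deriv_eq, heq.eq_of_nhds, ← logDeriv_apply,
    logDeriv_div (f := fun s ↦ (s - 1) * riemannZeta s) (g := fun s ↦ s) s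
      (mul_ne_zero (sub_ne_zero.2 hs1) hζ) hs0 (by fun_prop) differentiableAt_id,
    logDeriv_mul (f := fun s ↦ s - 1) (g := riemannZeta) s (sub_ne_zero.2 hs1)
      hζ (by fun_prop) hdiff]
  simp [logDeriv_apply]

lemma dslope_zetaOne_one_of_ne {s : ℂ} (hs : s ≠ 1) :
    dslope zetaOne 1 s = riemannZeta s - 1 / (s - 1) := by
  have hs1 : s - 1 ≠ 0 := sub_ne_zero.2 hs
  rw [dslope_of_ne _ hs, slope_def_field, zetaOne_one, zetaOne_of_ne_one hs]
  field_simp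

section VonMangoldt

open ArithmeticFunction DirichletCharacter

variable {N : ℕ} (χ : DirichletCharacter ℂ N)

/-- The coefficients of `-ζ'/ζ - L'/L(·, χ) - ζ`, whose pole at `1` cancels. -/
def vonMangoldtDiscrepancy : ℕ → ℂ :=
  (fun n : ℕ ↦ (vonMangoldt n : ℂ)) + (fun n : ℕ ↦ χ n) * (fun n ↦ (vonMangoldt n : ℂ)) - 1

lemma vonMangoldtDiscrepancy_apply (n : ℕ) :
    vonMangoldtDiscrepancy χ n = vonMangoldt n * (1 + χ n) - 1 := by
  simp only [vonMangoldtDiscrepancy, Pi.add_apply, Pi.sub_apply, Pi.mul_apply, Pi.one_apply]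
  ring

lemma LSeriesSummable_vonMangoldtDiscrepancy {s : ℂ} (hs : 1 < s.re) :
    LSeriesSummable (vonMangoldtDiscrepancy χ) s :=
  ((LSeriesSummable_vonMangoldt hs).add (LSeriesSummable_twist_vonMangoldt χ hs)).sub
    (LSeriesSummable_one_iff.2 hs)

variable [NeZero N]

lemma LSeries_vonMangoldtDiscrepancy {s : ℂ} (hs : 1 < s.re) :
    LSeries (vonMangoldtDiscrepancy χ) s = -logDeriv (fun s ↦ zetaOne s / s) s + -(1 / s) +
      -logDeriv χ.LFunction s + -dslope zetaOne 1 s := by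
  have hs1 : s ≠ 1 := by
    rintro rfl
    simp at hs
  rw [vonMangoldtDiscrepancy, LSeries_sub ((LSeriesSummable_vonMangoldt hs).add
    (LSeriesSummable_twist_vonMangoldt χ hs)) (LSeriesSummable_one_iff.2 hs),
    LSeries_add (LSeriesSummable_vonMangoldt hs) (LSeriesSummable_twist_vonMangoldt χ hs),
    LSeries_twist_vonMangoldt_eq χ hs, LSeries_vonMangoldt_eq_deriv_riemannZeta_div hs,
    LSeries_one_eq_riemannZeta hs, logDeriv_zetaOne_div hs, dslope_zetaOne_one_of_ne hs1,
    logDeriv_apply χ.LFunction, deriv_LFunction_eq_deriv_LSeries χ hs, LFunction_eq_LSeries χ hs]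
  ring

variable {χ}

theorem exists_abs_sum_vonMangoldt_mul_one_add_sub_le (hχ : χ ≠ 1) {r : ℕ → ℝ}
    (hr : ∀ n : ℕ, χ n = r n) (hr1 : ∀ n, -1 ≤ r n) (j : ℕ) :
    ∃ C : ℝ, 0 < C ∧ ∀ x : ℝ, 6 ≤ x →
      |∑ n ∈ Finset.Icc 1 ⌊x⌋₊, vonMangoldt n * (1 + r n) - x| ≤ C * x / Real.log x ^ j := by
  have hG := ((logBounded_logDeriv_zetaOne_div.neg.add logBounded_one_div.neg).add
    (logBounded_logDeriv_LFunction hχ).neg).add logBounded_dslope_zetaOne.neg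
  refine exists_abs_sum_sub_le (fun n ↦ mul_nonneg vonMangoldt_nonneg (by linarith [hr1 n]))
    (fun k ↦ ?_) j
  obtain ⟨C, hC, h⟩ := hG.exists_norm_sum_le
    (fun s hs ↦ LSeriesSummable_vonMangoldtDiscrepancy χ hs)
    (fun s hs ↦ (LSeries_vonMangoldtDiscrepancy χ hs).symm) k
  refine ⟨C, hC, fun x hx ↦ (le_of_eq ?_).trans (h x hx)⟩
  rw [← Real.norm_eq_abs, ← Complex.norm_real]
  congr 1
  push_cast
  simp only [vonMangoldtDiscrepancy_apply, hr]

end VonMangoldt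

/-! ### The quadratic character `(d / ·)` -/

/-- The Jacobi symbol `(d / n)` for odd `n`, extended by zero to even `n`: unlike `jacobiSym d`
itself it depends only on `n` modulo `4 |d|`. -/
def oddJacobiSym (d : ℤ) (n : ℕ) : ℤ := if Odd n then jacobiSym d n else 0

section OddJacobiSym

variable {d : ℤ}

lemma abs_oddJacobiSym_le_one (d : ℤ) (n : ℕ) : |oddJacobiSym d n| ≤ 1 := by
  unfold oddJacobiSym
  split_ifs
  · rcases jacobiSym.trichotomy d n with h | h | h <;> simp [h]
  · simp

lemma odd_mod_iff {m n : ℕ} (hm : Even m) : Odd (n % m) ↔ Odd n := by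
  rw [← Nat.not_even_iff_odd, ← Nat.not_even_iff_odd, hm.mod_even_iff]

lemma oddJacobiSym_mod (d : ℤ) (n : ℕ) :
    oddJacobiSym d (n % (4 * d.natAbs)) = oddJacobiSym d n := by
  have heven : Even (4 * d.natAbs) := (by decide : Even 4).mul_right _
  by_cases hn : Odd n
  · rw [oddJacobiSym, if_pos ((odd_mod_iff heven).2 hn), oddJacobiSym, if_pos hn,
      ← jacobiSym.mod_right d hn]
  · rw [oddJacobiSym, if_neg (hn ∘ (odd_mod_iff heven).1), oddJacobiSym, if_neg hn]

lemma oddJacobiSym_mul (d : ℤ) (m n : ℕ) :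
    oddJacobiSym d (m * n) = oddJacobiSym d m * oddJacobiSym d n := by
  simp only [oddJacobiSym, Nat.odd_mul]
  by_cases hm : Odd m
  · by_cases hn : Odd n
    · have : NeZero m := ⟨hm.pos.ne'⟩
      have : NeZero n := ⟨hn.pos.ne'⟩
      simp only [hm, hn, and_self, if_true, jacobiSym.mul_right]
    · simp [hn]
  · simp [hm]

lemma oddJacobiSym_eq_zero {n : ℕ} (hn : ¬ n.Coprime (4 * d.natAbs)) : oddJacobiSym d n = 0 := by
  unfold oddJacobiSym
  split_ifs with hodd
  · refine jacobiSym.eq_zero_iff.2 ⟨hodd.pos.ne', fun hgcd ↦ hn ?_⟩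
    exact Nat.Coprime.mul_right ((Nat.coprime_two_right.2 hodd).pow_right 2)
      (Nat.coprime_comm.1 hgcd)
  · rfl

/-- The quadratic character `n ↦ (d / n)` modulo `4 |d|`. -/
def jacobiChar (d : ℤ) [NeZero d] : DirichletCharacter ℤ (4 * d.natAbs) where
  toFun a := oddJacobiSym d a.val
  map_one' := by
    rw [ZMod.val_one'' (by omega)]
    simp [oddJacobiSym]
  map_mul' a b := by rw [ZMod.val_mul, oddJacobiSym_mod, oddJacobiSym_mul]
  map_nonunit' a ha := by
    have : NeZero (4 * d.natAbs) := ⟨mul_ne_zero four_ne_zero (Int.natAbs_ne_zero.2 (NeZero.ne d))⟩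
    refine oddJacobiSym_eq_zero fun hcop ↦ ha ?_
    rwa [← ZMod.isUnit_iff_coprime, ZMod.natCast_zmod_val] at hcop

lemma jacobiChar_natCast [NeZero d] (n : ℕ) : jacobiChar d n = oddJacobiSym d n := by
  change oddJacobiSym d (ZMod.val (n : ZMod (4 * d.natAbs))) = _
  rw [ZMod.val_natCast, oddJacobiSym_mod]

lemma jacobiSym_eq_one_of_modEq_one {n : ℕ} (h : n ≡ 1 [MOD 4 * d.natAbs]) :
    jacobiSym d n = 1 := by
  have hodd : Odd n := Nat.odd_iff.2 ((h.of_mul_right _).of_dvd (by decide : 2 ∣ 4))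
  rw [jacobiSym.mod_right d hodd, h, ← jacobiSym.mod_right d odd_one, jacobiSym.one_right]

-- By reciprocity `(p m / n) = (m / n) (n / p)` for `n ≡ 1 mod 4`, and the factors can be
-- prescribed separately by congruences on `n`.
lemma exists_jacobiSym_prime_mul_eq_neg_one {p : ℕ} (hp : p.Prime) (hp2 : p ≠ 2) {m : ℤ}
    (hpm : ¬ (p : ℤ) ∣ m) : ∃ n : ℕ, Odd n ∧ jacobiSym (p * m) n = -1 := by
  have : Fact p.Prime := ⟨hp⟩
  obtain ⟨u, hu⟩ := FiniteField.exists_nonsquare (F := ZMod p) (by rwa [ZMod.ringChar_zmod_n])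
  have hcop : (4 * m.natAbs).Coprime p := by
    refine Nat.Coprime.mul_left ?_ ?_
    · exact ((Nat.coprime_primes Nat.prime_two hp).2 hp2.symm).pow_left 2
    · rwa [Nat.coprime_comm, hp.coprime_iff_not_dvd, ← Int.natCast_dvd]
  obtain ⟨n, hnm, hnp⟩ := Nat.chineseRemainder hcop 1 u.val
  have hnu : ((n : ℤ) : ZMod p) = u := by
    rw [← ZMod.natCast_eq_natCast_iff, ZMod.natCast_zmod_val] at hnp
    exact_mod_cast hnp
  have hn4 : n % 4 = 1 := hnm.of_mul_right _
  refine ⟨n, Nat.odd_iff.2 (by omega), ?_⟩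
  rw [jacobiSym.mul_left, jacobiSym_eq_one_of_modEq_one hnm, mul_one,
    jacobiSym.quadratic_reciprocity_one_mod_four' (hp.odd_of_ne_two hp2) hn4,
    ← jacobiSym.legendreSym.to_jacobiSym, legendreSym.eq_neg_one_iff, hnu]
  exact hu

lemma natAbs_eq_one_or_two_of_squarefree (hd : Squarefree d)
    (h2 : ∀ p : ℕ, p.Prime → (p : ℤ) ∣ d → p = 2) : d.natAbs = 1 ∨ d.natAbs = 2 := by
  have hsub : d.natAbs.primeFactors ⊆ {2} := fun p hp ↦
    Finset.mem_singleton.2 (h2 p (Nat.prime_of_mem_primeFactors hp)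
      (Int.natCast_dvd.2 (Nat.dvd_of_mem_primeFactors hp)))
  rw [← Nat.prod_primeFactors_of_squarefree (Int.squarefree_natAbs.2 hd)]
  rcases Finset.subset_singleton_iff.1 hsub with h | h <;> simp [h]

lemma exists_jacobiSym_eq_neg_one (hd : Squarefree d) (hd1 : d ≠ 1) :
    ∃ n : ℕ, Odd n ∧ jacobiSym d n = -1 := by
  by_cases h2 : ∀ p : ℕ, p.Prime → (p : ℤ) ∣ d → p = 2
  · have habs := natAbs_eq_one_or_two_of_squarefree hd h2
    obtain rfl | rfl | rfl : d = -1 ∨ d = 2 ∨ d = -2 := by omega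
    · exact ⟨3, by decide, by norm_num⟩
    · exact ⟨3, by decide, by norm_num⟩
    · exact ⟨5, by decide, by norm_num⟩
  · push Not at h2
    obtain ⟨p, hp, ⟨m, rfl⟩, hp2⟩ := h2
    refine exists_jacobiSym_prime_mul_eq_neg_one hp hp2 ?_
    rintro ⟨k, rfl⟩
    exact (Nat.prime_iff_prime_int.1 hp).not_isUnit (hd p ⟨k, by ring⟩)

lemma jacobiChar_ne_one [NeZero d] (hd : Squarefree d) (hd1 : d ≠ 1) : jacobiChar d ≠ 1 := by
  obtain ⟨n, hn, hJ⟩ := exists_jacobiSym_eq_neg_one hd hd1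
  intro h
  have hval := jacobiChar_natCast (d := d) n
  rw [oddJacobiSym, if_pos hn, hJ, h] at hval
  by_cases hu : IsUnit (n : ZMod (4 * d.natAbs))
  · rw [MulChar.one_apply hu] at hval
    norm_num at hval
  · rw [MulChar.map_nonunit _ hu] at hval
    norm_num at hval

end OddJacobiSym

/-! ### The von Mangoldt function on ideals -/

section IdealLambda

variable {K : Type} [Field K] [NumberField K]

lemma idealLambda_nonneg (𝔞 : Ideal (𝓞 K)) : 0 ≤ IdealLambda K 𝔞 := by
  unfold IdealLambda
  split_ifs
  exacts [Real.log_natCast_nonneg _, le_rfl]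

lemma sum_idealLambda_nonneg (S : Finset (Ideal (𝓞 K))) : 0 ≤ ∑ 𝔞 ∈ S, IdealLambda K 𝔞 :=
  Finset.sum_nonneg fun 𝔞 _ ↦ idealLambda_nonneg 𝔞

lemma idealLambda_pow {𝔭 : Ideal (𝓞 K)} (hp : 𝔭.IsPrime) (h0 : 𝔭 ≠ ⊥) {k : ℕ} (hk : k ≠ 0) :
    IdealLambda K (𝔭 ^ k) = Real.log (absNorm 𝔭) := by
  rw [IdealLambda, if_pos ⟨𝔭, k, hp, h0, Nat.pos_of_ne_zero hk, rfl⟩, Ideal.radical_pow _ hk,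
    hp.radical]

lemma exists_eq_pow_of_idealLambda_ne_zero {𝔞 : Ideal (𝓞 K)} (h : IdealLambda K 𝔞 ≠ 0) :
    ∃ (𝔭 : Ideal (𝓞 K)) (k : ℕ), 𝔭.IsPrime ∧ 𝔭 ≠ ⊥ ∧ k ≠ 0 ∧ 𝔞 = 𝔭 ^ k := by
  unfold IdealLambda at h
  split_ifs at h with hpow
  · obtain ⟨𝔭, k, hp, h0, hk, rfl⟩ := hpow
    exact ⟨𝔭, k, hp, h0, hk.ne', rfl⟩
  · exact absurd rfl h

lemma absNorm_pos {𝔞 : Ideal (𝓞 K)} (h : 𝔞 ≠ ⊥) : 0 < absNorm 𝔞 :=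
  Nat.pos_of_ne_zero (absNorm_eq_zero_iff.not.2 h)

lemma one_lt_absNorm_of_isPrime {𝔭 : Ideal (𝓞 K)} (hp : 𝔭.IsPrime) (h0 : 𝔭 ≠ ⊥) :
    1 < absNorm 𝔭 := by
  have hpos := absNorm_pos h0
  have hone : absNorm 𝔭 ≠ 1 := absNorm_eq_one_iff.not.2 hp.ne_top
  omega

lemma sum_log_absNorm_le {𝔞 : Ideal (𝓞 K)} (h𝔞 : 𝔞 ≠ ⊥) (P : Finset (Ideal (𝓞 K)))
    (hP : ∀ 𝔭 ∈ P, 𝔭.IsPrime ∧ 𝔭 ≠ ⊥ ∧ 𝔭 ∣ 𝔞) :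
    ∑ 𝔭 ∈ P, Real.log (absNorm 𝔭) ≤ Real.log (absNorm 𝔞) := by
  have hdvd : ∏ 𝔭 ∈ P, 𝔭 ∣ 𝔞 :=
    Finset.prod_primes_dvd _ (fun 𝔭 h ↦ Ideal.prime_of_isPrime (hP 𝔭 h).2.1 (hP 𝔭 h).1)
      fun 𝔭 h ↦ (hP 𝔭 h).2.2
  have hle : absNorm (∏ 𝔭 ∈ P, 𝔭) ≤ absNorm 𝔞 :=
    Nat.le_of_dvd (absNorm_pos h𝔞) (map_dvd absNorm hdvd)
  have hpos : ∀ 𝔭 ∈ P, (0 : ℝ) < absNorm 𝔭 := fun 𝔭 h ↦ Nat.cast_pos.2 (absNorm_pos (hP 𝔭 h).2.1)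
  rw [map_prod] at hle
  rw [← Real.log_prod fun 𝔭 h ↦ (hpos 𝔭 h).ne']
  exact Real.log_le_log (Finset.prod_pos hpos) (by exact_mod_cast hle)

/-- The finite set of ideals of norm `n`. -/
def idealsOfNorm (K : Type) [Field K] [NumberField K] (n : ℕ) : Finset (Ideal (𝓞 K)) :=
  (finite_setOfPred_absNorm_eq n).toFinset

lemma mem_idealsOfNorm {n : ℕ} {𝔞 : Ideal (𝓞 K)} : 𝔞 ∈ idealsOfNorm K n ↔ absNorm 𝔞 = n := by
  simp [idealsOfNorm]

lemma sum_idealLambda_idealsOfNorm_eq_zero {n : ℕ} (hn : ¬ IsPrimePow n) :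
    ∑ 𝔞 ∈ idealsOfNorm K n, IdealLambda K 𝔞 = 0 := by
  refine Finset.sum_eq_zero fun 𝔞 h𝔞 ↦ by_contra fun h ↦ hn ?_
  obtain ⟨𝔭, k, h𝔭, h0, hk, rfl⟩ := exists_eq_pow_of_idealLambda_ne_zero h
  have : 𝔭.IsMaximal := h𝔭.isMaximal h0
  obtain ⟨p, f, hf, -, hp, hnorm⟩ := exists_prime_and_absNorm_eq_pow 𝔭
  rw [← mem_idealsOfNorm.1 h𝔞, map_pow, hnorm]
  exact (hp.isPrimePow.pow hf.ne').pow hk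

lemma eq_of_radical_eq_of_absNorm_eq {𝔞 𝔟 : Ideal (𝓞 K)} (h𝔞 : IdealLambda K 𝔞 ≠ 0)
    (h𝔟 : IdealLambda K 𝔟 ≠ 0) (hrad : 𝔞.radical = 𝔟.radical) (hnorm : absNorm 𝔞 = absNorm 𝔟) :
    𝔞 = 𝔟 := by
  obtain ⟨𝔭, k, hp, hp0, hk, rfl⟩ := exists_eq_pow_of_idealLambda_ne_zero h𝔞
  obtain ⟨𝔮, l, hq, -, hl, rfl⟩ := exists_eq_pow_of_idealLambda_ne_zero h𝔟
  rw [Ideal.radical_pow _ hk, hp.radical, Ideal.radical_pow _ hl, hq.radical] at hrad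
  subst hrad
  rw [map_pow, map_pow] at hnorm
  rw [Nat.pow_right_injective (one_lt_absNorm_of_isPrime hp hp0) hnorm]

lemma sum_idealLambda_eq_sum_log_radical {S : Finset (Ideal (𝓞 K))} {n : ℕ}
    (hS : ∀ 𝔞 ∈ S, IdealLambda K 𝔞 ≠ 0 ∧ absNorm 𝔞 = n) :
    ∑ 𝔞 ∈ S, IdealLambda K 𝔞 = ∑ 𝔭 ∈ S.image Ideal.radical, Real.log (absNorm 𝔭) := by
  rw [Finset.sum_image fun 𝔞 h𝔞 𝔟 h𝔟 hrad ↦ eq_of_radical_eq_of_absNorm_eq (hS 𝔞 h𝔞).1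
    (hS 𝔟 h𝔟).1 hrad ((hS 𝔞 h𝔞).2.trans (hS 𝔟 h𝔟).2.symm)]
  refine Finset.sum_congr rfl fun 𝔞 h𝔞 ↦ ?_
  obtain ⟨𝔭, k, hp, h0, hk, rfl⟩ := exists_eq_pow_of_idealLambda_ne_zero (hS 𝔞 h𝔞).1
  rw [idealLambda_pow hp h0 hk, Ideal.radical_pow _ hk, hp.radical]

lemma sum_idealLambda_idealsOfNorm_le (n : ℕ) :
    ∑ 𝔞 ∈ idealsOfNorm K n, IdealLambda K 𝔞 ≤
      Module.finrank ℚ K * ArithmeticFunction.vonMangoldt n := by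
  by_cases hn : IsPrimePow n
  swap
  · rw [sum_idealLambda_idealsOfNorm_eq_zero hn]
    have : 0 ≤ ArithmeticFunction.vonMangoldt n := ArithmeticFunction.vonMangoldt_nonneg
    positivity
  obtain ⟨p, m, hp, hm, rfl⟩ := (isPrimePow_nat_iff n).1 hn
  have hp0 : (p : 𝓞 K) ≠ 0 := Nat.cast_ne_zero.2 hp.ne_zero
  rw [← Finset.sum_filter_ne_zero, sum_idealLambda_eq_sum_log_radical (n := p ^ m) fun 𝔞 h𝔞 ↦
    ⟨(Finset.mem_filter.1 h𝔞).2, mem_idealsOfNorm.1 (Finset.mem_filter.1 h𝔞).1⟩]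
  refine (sum_log_absNorm_le (𝔞 := span {(p : 𝓞 K)}) (by rwa [Ne, span_singleton_eq_bot]) _
    fun 𝔭 h𝔭 ↦ ?_).trans_eq ?_
  · obtain ⟨𝔞, h𝔞, rfl⟩ := Finset.mem_image.1 h𝔭
    obtain ⟨hmem, hΛ⟩ := Finset.mem_filter.1 h𝔞
    obtain ⟨𝔭, k, hprime, h0, hk, rfl⟩ := exists_eq_pow_of_idealLambda_ne_zero hΛ
    rw [Ideal.radical_pow _ hk, hprime.radical]
    refine ⟨hprime, h0, Ideal.dvd_span_singleton.2 (hprime.mem_of_pow_mem m ?_)⟩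
    rw [← Nat.cast_pow, ← mem_idealsOfNorm.1 hmem]
    exact Ideal.pow_le_self hk (absNorm_mem _)
  · rw [absNorm_span_natCast, RingOfIntegers.rank, Nat.cast_pow, Real.log_pow,
      ArithmeticFunction.vonMangoldt_apply_pow hm.ne',
      ArithmeticFunction.vonMangoldt_apply_prime hp]

/-- The finite set of nonzero ideals of norm at most `x`. -/
def idealsOfNormLE (K : Type) [Field K] [NumberField K] (x : ℝ) : Finset (Ideal (𝓞 K)) :=
  (Finset.Icc 1 ⌊x⌋₊).biUnion (idealsOfNorm K)

lemma mem_idealsOfNormLE {x : ℝ} (hx : 0 ≤ x) {𝔞 : Ideal (𝓞 K)} :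
    𝔞 ∈ idealsOfNormLE K x ↔ 𝔞 ≠ ⊥ ∧ (absNorm 𝔞 : ℝ) ≤ x := by
  simp only [idealsOfNormLE, Finset.mem_biUnion, mem_idealsOfNorm, Finset.mem_Icc,
    exists_eq_right', Nat.le_floor_iff hx, Nat.one_le_iff_ne_zero, Ne, absNorm_eq_zero_iff]

lemma sum_idealsOfNormLE (f : Ideal (𝓞 K) → ℝ) (x : ℝ) :
    ∑ 𝔞 ∈ idealsOfNormLE K x, f 𝔞 =
      ∑ n ∈ Finset.Icc 1 ⌊x⌋₊, ∑ 𝔞 ∈ idealsOfNorm K n, f 𝔞 := by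
  refine Finset.sum_biUnion fun m _ n _ hmn ↦ Finset.disjoint_left.2 fun 𝔞 hm hn ↦ hmn ?_
  exact (mem_idealsOfNorm.1 hm).symm.trans (mem_idealsOfNorm.1 hn)

/-- The finite set of prime divisors of a nonzero ideal. -/
def idealPrimeDivisors (𝔮 : Ideal (𝓞 K)) : Finset (Ideal (𝓞 K)) :=
  (UniqueFactorizationMonoid.normalizedFactors 𝔮).toFinset

lemma mem_idealPrimeDivisors {𝔮 : Ideal (𝓞 K)} (h𝔮 : 𝔮 ≠ ⊥) {𝔭 : Ideal (𝓞 K)} :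
    𝔭 ∈ idealPrimeDivisors 𝔮 ↔ 𝔭.IsPrime ∧ 𝔭 ≠ ⊥ ∧ 𝔭 ∣ 𝔮 := by
  rw [idealPrimeDivisors, Multiset.mem_toFinset,
    UniqueFactorizationMonoid.mem_normalizedFactors_iff h𝔮, ← and_assoc]
  exact and_congr_left fun _ ↦ ⟨fun h ↦ ⟨Ideal.isPrime_of_prime h, h.ne_zero⟩,
    fun h ↦ Ideal.prime_of_isPrime h.2 h.1⟩

lemma exists_pow_eq_of_not_coprimeIdeals {𝔞 𝔮 : Ideal (𝓞 K)} (h𝔮 : 𝔮 ≠ ⊥) {x : ℝ}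
    (h𝔞x : (absNorm 𝔞 : ℝ) ≤ x) (h : ¬ CoprimeIdeals K 𝔞 𝔮) (hΛ : IdealLambda K 𝔞 ≠ 0) :
    ∃ 𝔭 ∈ idealPrimeDivisors 𝔮, ∃ k ∈ Finset.Icc 1 (Nat.log 2 ⌊x⌋₊), 𝔭 ^ k = 𝔞 := by
  obtain ⟨𝔭, k, hp, hp0, hk, rfl⟩ := exists_eq_pow_of_idealLambda_ne_zero hΛ
  simp only [CoprimeIdeals, not_not] at h
  obtain ⟨𝔯, hr, hr0, hdvd, hr𝔮⟩ := h
  have hdvd' : 𝔯 ∣ 𝔭 := (Ideal.prime_of_isPrime hr0 hr).dvd_of_dvd_pow hdvd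
  obtain rfl : 𝔭 = 𝔯 := (hp.isMaximal hp0).eq_of_le hr.ne_top (Ideal.le_of_dvd hdvd')
  refine ⟨𝔭, (mem_idealPrimeDivisors h𝔮).2 ⟨hp, hp0, hr𝔮⟩, k, Finset.mem_Icc.2
    ⟨Nat.one_le_iff_ne_zero.2 hk, Nat.le_log_of_pow_le one_lt_two ?_⟩, rfl⟩
  calc 2 ^ k ≤ absNorm 𝔭 ^ k := Nat.pow_le_pow_left (one_lt_absNorm_of_isPrime hp hp0) k
    _ = absNorm (𝔭 ^ k) := (map_pow _ _ _).symm
    _ ≤ ⌊x⌋₊ := Nat.le_floor h𝔞x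

lemma natLog_two_floor_le {x : ℝ} (hx : 1 ≤ x) : (Nat.log 2 ⌊x⌋₊ : ℝ) ≤ 2 * Real.log x := by
  have hpow : (2 : ℝ) ^ Nat.log 2 ⌊x⌋₊ ≤ x :=
    le_trans (by exact_mod_cast Nat.pow_log_le_self 2 (Nat.floor_pos.2 hx).ne')
      (Nat.floor_le (by linarith))
  have hlog := Real.log_le_log (by positivity) hpow
  rw [Real.log_pow] at hlog
  have : (0 : ℝ) ≤ Nat.log 2 ⌊x⌋₊ := Nat.cast_nonneg _
  nlinarith [Real.log_two_gt_d9]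

lemma sum_idealLambda_not_coprime_le {𝔮 : Ideal (𝓞 K)} (h𝔮 : 𝔮 ≠ ⊥) {x : ℝ} (hx : 1 ≤ x)
    (h𝔮x : (absNorm 𝔮 : ℝ) ≤ x) :
    ∑ 𝔞 ∈ idealsOfNormLE K x with ¬ CoprimeIdeals K 𝔞 𝔮, IdealLambda K 𝔞 ≤
      2 * Real.log x ^ 2 := by
  set k₀ := Nat.log 2 ⌊x⌋₊
  set T := idealPrimeDivisors 𝔮 ×ˢ Finset.Icc 1 k₀
  have hsub : {𝔞 ∈ {𝔞 ∈ idealsOfNormLE K x | ¬ CoprimeIdeals K 𝔞 𝔮} | IdealLambda K 𝔞 ≠ 0} ⊆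
      T.image fun y ↦ y.1 ^ y.2 := fun 𝔞 h𝔞 ↦ by
    simp only [Finset.mem_filter, mem_idealsOfNormLE (zero_le_one.trans hx)] at h𝔞
    obtain ⟨𝔭, h𝔭, k, hk, rfl⟩ := exists_pow_eq_of_not_coprimeIdeals h𝔮 h𝔞.1.1.2 h𝔞.1.2 h𝔞.2
    exact Finset.mem_image.2 ⟨(𝔭, k), Finset.mem_product.2 ⟨h𝔭, hk⟩, rfl⟩
  calc ∑ 𝔞 ∈ idealsOfNormLE K x with ¬ CoprimeIdeals K 𝔞 𝔮, IdealLambda K 𝔞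
      ≤ ∑ 𝔞 ∈ T.image fun y ↦ y.1 ^ y.2, IdealLambda K 𝔞 := by
        rw [← Finset.sum_filter_ne_zero]
        exact Finset.sum_le_sum_of_subset_of_nonneg hsub fun 𝔞 _ _ ↦ idealLambda_nonneg 𝔞
    _ ≤ ∑ y ∈ T, IdealLambda K (y.1 ^ y.2) :=
        Finset.sum_image_le_of_nonneg fun 𝔞 _ ↦ idealLambda_nonneg 𝔞
    _ = ∑ y ∈ T, Real.log (absNorm y.1) := by
        refine Finset.sum_congr rfl fun y hy ↦ ?_
        rw [Finset.mem_product, mem_idealPrimeDivisors h𝔮, Finset.mem_Icc] at hy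
        exact idealLambda_pow hy.1.1 hy.1.2.1 (by omega)
    _ = k₀ * ∑ 𝔭 ∈ idealPrimeDivisors 𝔮, Real.log (absNorm 𝔭) := by
        rw [Finset.sum_product]
        simp [Finset.mul_sum]
    _ ≤ 2 * Real.log x * Real.log x := by
        gcongr
        · exact mul_nonneg zero_le_two (Real.log_nonneg hx)
        · exact natLog_two_floor_le hx
        · refine (sum_log_absNorm_le h𝔮 _ fun 𝔭 h ↦ (mem_idealPrimeDivisors h𝔮).1 h).trans ?_
          exact Real.log_le_log (Nat.cast_pos.2 (absNorm_pos h𝔮)) h𝔮x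
    _ = _ := by ring

end IdealLambda

/-! ### Splitting of primes in a quadratic field -/

section Splitting

variable {K : Type} [Field K] [NumberField K]

lemma idealLambda_of_absNorm_prime {𝔞 : Ideal (𝓞 K)} {p : ℕ} (hp : p.Prime)
    (h : absNorm 𝔞 = p) : IdealLambda K 𝔞 = Real.log p := by
  have hprime : 𝔞.IsPrime :=
    isPrime_of_irreducible_absNorm (by rw [h]; exact hp.prime.irreducible)
  have h0 : 𝔞 ≠ ⊥ := by
    rintro rfl
    exact hp.ne_zero (by rw [← h, absNorm_bot])
  simpa [h] using idealLambda_pow hprime h0 one_ne_zero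

variable {d : ℤ} {θ : 𝓞 K} {p : ℕ}

-- The residue field of a prime of norm `p` is `ZMod p`, and `θ` reduces to a square root of `d`.
lemma isSquare_of_absNorm_eq {𝔞 : Ideal (𝓞 K)} (hp : p.Prime) (h : absNorm 𝔞 = p)
    (hθ : θ ^ 2 = d) : IsSquare (d : ZMod p) := by
  have : Finite (𝓞 K ⧸ 𝔞) := (absNorm_ne_zero_iff 𝔞).1 (by rw [h]; exact hp.ne_zero)
  have := Fintype.ofFinite (𝓞 K ⧸ 𝔞)
  have hcard : Fintype.card (𝓞 K ⧸ 𝔞) = p := by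
    rw [← Nat.card_eq_fintype_card, ← h]
    rfl
  let f : 𝓞 K →+* ZMod p :=
    (ZMod.ringEquivOfPrime _ hp hcard).symm.toRingHom.comp (Ideal.Quotient.mk 𝔞)
  exact ⟨f θ, by rw [← pow_two, ← map_pow, hθ, map_intCast]⟩

lemma trace_eq_zero_of_sq_eq (hd : ¬ IsSquare d) (hθ : θ ^ 2 = d) :
    Algebra.trace ℤ (𝓞 K) θ = 0 := by
  have hθK : (θ : K) ^ 2 = d := by simpa using congrArg (algebraMap (𝓞 K) K) hθ
  have hmin : minpoly ℚ (θ : K) = Polynomial.X ^ 2 - Polynomial.C (d : ℚ) := by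
    refine (minpoly.eq_of_irreducible_of_monic
      (X_pow_sub_C_irreducible_of_prime Nat.prime_two fun b hb ↦ hd ?_) (by simp [hθK])
      (Polynomial.monic_X_pow_sub_C _ two_ne_zero)).symm
    exact Rat.isSquare_intCast_iff.1 ⟨b, by rw [← hb, pow_two]⟩
  have htrace : ((Algebra.trace ℤ (𝓞 K) θ : ℤ) : ℚ) = 0 := by
    rw [Algebra.coe_trace_int, trace_eq_finrank_mul_minpoly_nextCoeff, hmin,
      Polynomial.nextCoeff_of_natDegree_pos (by rw [Polynomial.natDegree_X_pow_sub_C]; norm_num),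
      Polynomial.natDegree_X_pow_sub_C, Polynomial.coeff_sub, Polynomial.coeff_X_pow,
      Polynomial.coeff_C]
    norm_num
  exact_mod_cast htrace

lemma not_natCast_dvd_sub_intCast (hd : ¬ IsSquare d) (hθ : θ ^ 2 = d) {b : ℤ}
    (hb : ¬ (p : ℤ) ∣ Module.finrank ℚ K * b) : ¬ (p : 𝓞 K) ∣ θ - b := by
  rintro ⟨γ, hγ⟩
  refine hb ((dvd_neg).1 ⟨Algebra.trace ℤ (𝓞 K) γ, ?_⟩)
  have htrace := congrArg (Algebra.trace ℤ (𝓞 K)) hγ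
  rw [map_sub, trace_eq_zero_of_sq_eq hd hθ, ← eq_intCast (algebraMap ℤ (𝓞 K)),
    Algebra.trace_algebraMap, RingOfIntegers.rank, ← nsmul_eq_mul, map_nsmul] at htrace
  simpa using htrace

/-- The ideal `(p, θ - a)`; for `a` a root modulo `p` of the minimal polynomial of `θ`, it is the
prime above `p` that Dedekind's criterion attaches to that root. -/
def dedekindIdeal (p : ℕ) (θ : 𝓞 K) (a : ℤ) : Ideal (𝓞 K) := span {(p : 𝓞 K), θ - a}

lemma isCoprime_dedekindIdeal (hp : p.Prime) {a b : ℤ} (hab : ¬ (p : ℤ) ∣ a - b) :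
    IsCoprime (dedekindIdeal p θ a) (dedekindIdeal p θ b) := by
  obtain ⟨u, v, huv⟩ := (Nat.prime_iff_prime_int.1 hp).coprime_iff_not_dvd.2 hab
  have hone : (u * p + v * (a - b) : 𝓞 K) = 1 := by
    exact_mod_cast congrArg (Int.cast (R := 𝓞 K)) huv
  refine Ideal.isCoprime_iff_exists.2 ⟨u * p - v * (θ - a), ?_, v * (θ - b), ?_, ?_⟩
  · exact sub_mem (mul_mem_left _ _ (subset_span (by simp)))
      (mul_mem_left _ _ (subset_span (by simp)))
  · exact mul_mem_left _ _ (subset_span (by simp))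
  · linear_combination hone

lemma dedekindIdeal_mul_dedekindIdeal_neg (hp : p.Prime) (hθ : θ ^ 2 = d) {a : ℤ}
    (ha : (p : ℤ) ∣ a ^ 2 - d) (h2a : ¬ (p : ℤ) ∣ 2 * a) :
    dedekindIdeal p θ a * dedekindIdeal p θ (-a) = span {(p : 𝓞 K)} := by
  obtain ⟨c, hc⟩ := ha
  have hcK : (a : 𝓞 K) ^ 2 - d = p * c := by exact_mod_cast congrArg (Int.cast (R := 𝓞 K)) hc
  refine le_antisymm ?_ ?_
  · rw [dedekindIdeal, dedekindIdeal, Ideal.span_pair_mul_span_pair, span_le]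
    rintro z hz
    rw [SetLike.mem_coe, mem_span_singleton]
    rcases hz with rfl | rfl | rfl | rfl
    · exact dvd_mul_right _ _
    · exact dvd_mul_right _ _
    · exact dvd_mul_left _ _
    · refine ⟨-c, ?_⟩
      push_cast
      linear_combination hθ - hcK
  · rw [Ideal.mul_eq_inf_of_isCoprime (isCoprime_dedekindIdeal hp
      (by rwa [sub_neg_eq_add, ← two_mul])), span_singleton_le_iff_mem]
    exact ⟨subset_span (by simp), subset_span (by simp)⟩

lemma absNorm_dedekindIdeal (hdeg : Module.finrank ℚ K = 2) (hd : ¬ IsSquare d)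
    (hθ : θ ^ 2 = d) (hp : p.Prime) {a : ℤ} (ha : (p : ℤ) ∣ a ^ 2 - d)
    (h2a : ¬ (p : ℤ) ∣ 2 * a) : absNorm (dedekindIdeal p θ a) = p := by
  have hmul := dedekindIdeal_mul_dedekindIdeal_neg hp hθ ha h2a
  have hnorm : absNorm (dedekindIdeal p θ a) * absNorm (dedekindIdeal p θ (-a)) = p ^ 2 := by
    rw [← map_mul, hmul, absNorm_span_natCast, RingOfIntegers.rank, hdeg]
  have hmem (b : ℤ) : θ - b ∈ dedekindIdeal p θ b := subset_span (by simp)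
  refine ((Nat.Prime.mul_eq_prime_sq_iff hp ?_ ?_).1 hnorm).1
  · rw [Ne, absNorm_eq_one_iff]
    intro htop
    rw [htop, Ideal.top_mul] at hmul
    exact not_natCast_dvd_sub_intCast hd hθ (b := -a) (by simpa [hdeg] using h2a)
      (mem_span_singleton.1 (hmul ▸ hmem (-a)))
  · rw [Ne, absNorm_eq_one_iff]
    intro htop
    rw [htop, Ideal.mul_top] at hmul
    exact not_natCast_dvd_sub_intCast hd hθ (b := a) (by simpa [hdeg] using h2a)
      (mem_span_singleton.1 (hmul ▸ hmem a))

lemma idealsOfNorm_eq_pair (hp : p.Prime) {I J : Ideal (𝓞 K)} (hI : absNorm I = p)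
    (hJ : absNorm J = p) (hIJ : I * J = span {(p : 𝓞 K)}) : idealsOfNorm K p = {I, J} := by
  have hprime {L : Ideal (𝓞 K)} (hL : absNorm L = p) : L.IsPrime :=
    isPrime_of_irreducible_absNorm (by rw [hL]; exact hp.prime.irreducible)
  have hmax {L : Ideal (𝓞 K)} (hL : absNorm L = p) : L.IsMaximal := by
    refine (hprime hL).isMaximal ?_
    rintro rfl
    exact hp.ne_zero (by rw [← hL, absNorm_bot])
  ext L
  rw [mem_idealsOfNorm, Finset.mem_insert, Finset.mem_singleton]
  refine ⟨fun hL ↦ ?_, by rintro (rfl | rfl) <;> assumption⟩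
  have hle : I * J ≤ L := by
    rw [hIJ, span_singleton_le_iff_mem, ← hL]
    exact absNorm_mem L
  exact ((hprime hL).mul_le.1 hle).imp
    (fun h ↦ ((hmax hI).eq_of_le (hprime hL).ne_top h).symm)
    fun h ↦ ((hmax hJ).eq_of_le (hprime hL).ne_top h).symm

lemma card_idealsOfNorm_of_split (hdeg : Module.finrank ℚ K = 2) (hd : ¬ IsSquare d)
    (hθ : θ ^ 2 = d) (hp : p.Prime) {a : ℤ} (ha : (p : ℤ) ∣ a ^ 2 - d)
    (h2a : ¬ (p : ℤ) ∣ 2 * a) : (idealsOfNorm K p).card = 2 := by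
  have hnorm := absNorm_dedekindIdeal hdeg hd hθ hp ha h2a
  have hnorm_neg := absNorm_dedekindIdeal hdeg hd hθ hp (a := -a) (by simpa using ha)
    (by simpa using h2a)
  rw [idealsOfNorm_eq_pair hp hnorm hnorm_neg (dedekindIdeal_mul_dedekindIdeal_neg hp hθ ha h2a),
    Finset.card_pair]
  intro heq
  have hcop := isCoprime_dedekindIdeal (θ := θ) hp (a := a) (b := -a)
    (by rwa [sub_neg_eq_add, ← two_mul])
  rw [← heq, isCoprime_self, Ideal.isUnit_iff, ← absNorm_eq_one_iff, hnorm] at hcop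
  exact hp.ne_one hcop

lemma card_idealsOfNorm_prime (hdeg : Module.finrank ℚ K = 2) (hd : ¬ IsSquare d)
    (hθ : θ ^ 2 = d) (hp : p.Prime) (hpd : p.Coprime (4 * d.natAbs)) :
    ((idealsOfNorm K p).card : ℤ) = 1 + jacobiSym d p := by
  have : Fact p.Prime := ⟨hp⟩
  have hp2 : ¬ p ∣ 2 := fun h ↦
    hp.not_dvd_one (hpd ▸ Nat.dvd_gcd dvd_rfl (h.trans ⟨2 * d.natAbs, by ring⟩))
  have hpd' : ¬ (p : ℤ) ∣ d := fun h ↦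
    hp.not_dvd_one (hpd ▸ Nat.dvd_gcd dvd_rfl ((Int.natCast_dvd.1 h).mul_left 4))
  rw [← jacobiSym.legendreSym.to_jacobiSym]
  by_cases hsq : IsSquare (d : ZMod p)
  · obtain ⟨y, hy⟩ := id hsq
    obtain ⟨a, rfl⟩ := ZMod.intCast_surjective y
    have ha : (p : ℤ) ∣ a ^ 2 - d := by
      rw [← ZMod.intCast_zmod_eq_zero_iff_dvd]
      push_cast
      rw [hy, pow_two, sub_self]
    have h2a : ¬ (p : ℤ) ∣ 2 * a := fun h ↦
      ((Nat.prime_iff_prime_int.1 hp).dvd_or_dvd h).elim (fun h ↦ hp2 (by exact_mod_cast h))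
        fun h ↦ hpd' ((dvd_sub_right (h.pow two_ne_zero)).1 ha)
    rw [(legendreSym.eq_one_iff p (by rwa [Ne, ZMod.intCast_zmod_eq_zero_iff_dvd])).2 hsq,
      card_idealsOfNorm_of_split hdeg hd hθ hp ha h2a]
    norm_num
  · rw [(legendreSym.eq_neg_one_iff p).2 hsq, Finset.card_eq_zero.2]
    · norm_num
    · exact Finset.eq_empty_of_forall_notMem fun 𝔞 h ↦
        hsq (isSquare_of_absNorm_eq hp (mem_idealsOfNorm.1 h) hθ)

lemma sum_idealLambda_idealsOfNorm_prime (hdeg : Module.finrank ℚ K = 2) (hd : ¬ IsSquare d)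
    (hθ : θ ^ 2 = d) (hp : p.Prime) (hpd : p.Coprime (4 * d.natAbs)) :
    ∑ 𝔞 ∈ idealsOfNorm K p, IdealLambda K 𝔞 = Real.log p * (1 + jacobiSym d p) := by
  have hcard : ((idealsOfNorm K p).card : ℝ) = 1 + jacobiSym d p := by
    exact_mod_cast card_idealsOfNorm_prime hdeg hd hθ hp hpd
  rw [Finset.sum_congr rfl fun 𝔞 h ↦ idealLambda_of_absNorm_prime hp (mem_idealsOfNorm.1 h),
    Finset.sum_const, nsmul_eq_mul, hcard, mul_comm]

lemma exists_squarefree_mul_sq_eq {q : ℚ} (hq : q ≠ 0) :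
    ∃ (d : ℤ) (r : ℚ), Squarefree d ∧ r ≠ 0 ∧ d * r ^ 2 = q := by
  have hN : q.num * q.den ≠ 0 := mul_ne_zero (Rat.num_ne_zero.2 hq) (Int.natCast_ne_zero.2 q.den_nz)
  obtain ⟨e, b, hbe, he⟩ := Nat.sq_mul_squarefree (q.num * q.den).natAbs
  have hb : b ≠ 0 := by
    rintro rfl
    exact hN (Int.natAbs_eq_zero.1 (by rw [← hbe]; ring))
  have hsign : (q.num * q.den).sign * e * b ^ 2 = q.num * q.den := by
    rw [mul_assoc, mul_comm (e : ℤ), ← Nat.cast_pow, ← Nat.cast_mul, hbe, Int.sign_mul_natAbs]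
  refine ⟨(q.num * q.den).sign * e, b / q.den, ?_, ?_, ?_⟩
  · rwa [← Int.squarefree_natAbs, Int.natAbs_mul, Int.natAbs_sign_of_ne_zero hN, one_mul,
      Int.natAbs_natCast]
  · have := q.den_nz
    positivity
  · have hden : (q.den : ℚ) ≠ 0 := Nat.cast_ne_zero.2 q.den_nz
    rw [div_pow, ← mul_div_assoc, div_eq_iff (pow_ne_zero 2 hden), pow_two (q.den : ℚ),
      ← mul_assoc, Rat.mul_den_eq_num]
    exact_mod_cast hsign

-- A quadratic extension of `ℚ` is cyclic, so it is generated by a square root of a rational.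
lemma exists_squarefree_sq_eq (hdeg : Module.finrank ℚ K = 2) :
    ∃ (d : ℤ) (θ : 𝓞 K), Squarefree d ∧ d ≠ 1 ∧ θ ^ 2 = d := by
  have : Algebra.IsQuadraticExtension ℚ K := ⟨hdeg⟩
  have hroot : (primitiveRoots (Module.finrank ℚ K) ℚ).Nonempty :=
    ⟨-1, by rw [hdeg, mem_primitiveRoots two_pos]; exact IsPrimitiveRoot.neg_one 0 two_ne_zero.symm⟩
  obtain ⟨α, ⟨q, hq⟩, hα⟩ := exists_root_adjoin_eq_top_of_isCyclic ℚ K hroot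
  have hirr := irreducible_X_pow_sub_C_of_root_adjoin_eq_top hq.symm hα
  rw [hdeg] at hirr hq
  have hnsq : ∀ b : ℚ, b ^ 2 ≠ q :=
    pow_ne_of_irreducible_X_pow_sub_C hirr dvd_rfl (by norm_num)
  obtain ⟨d, r, hd, hr, rfl⟩ := exists_squarefree_mul_sq_eq fun h : q = 0 ↦ hnsq 0 (by simp [h])
  have hθ : (α / r) ^ 2 = (d : K) := by
    have hrK : (r : K) ≠ 0 := Rat.cast_ne_zero.2 hr
    rw [div_pow, ← hq, div_eq_iff (pow_ne_zero 2 hrK)]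
    simp
  have hint : IsIntegral ℤ ((α / r) ^ 2) := hθ ▸ isIntegral_algebraMap
  obtain ⟨θ, hθα⟩ : ∃ θ : 𝓞 K, algebraMap (𝓞 K) K θ = α / r :=
    ⟨⟨_, IsIntegral.of_pow two_pos hint⟩, rfl⟩
  refine ⟨d, θ, hd, ?_, ?_⟩
  · rintro rfl
    exact hnsq r (by simp)
  · apply RingOfIntegers.coe_injective
    rw [map_pow, map_intCast, hθα, hθ]

end Splitting

/-! ### The prime ideal theorem -/

section PrimeIdealTheorem

variable {K : Type} [Field K] [NumberField K]

lemma not_isSquare_of_squarefree {d : ℤ} (hd : Squarefree d) (hd1 : d ≠ 1) : ¬ IsSquare d := by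
  rintro ⟨a, rfl⟩
  exact hd1 (Int.isUnit_mul_self (hd a dvd_rfl))

section Quadratic

variable {d : ℤ} {θ : 𝓞 K}

lemma abs_sum_idealLambda_idealsOfNorm_sub_le (hdeg : Module.finrank ℚ K = 2)
    (hd : ¬ IsSquare d) (hθ : θ ^ 2 = d) (n : ℕ) :
    |∑ 𝔞 ∈ idealsOfNorm K n, IdealLambda K 𝔞 -
        ArithmeticFunction.vonMangoldt n * (1 + oddJacobiSym d n)| ≤
      2 * (ArithmeticFunction.vonMangoldt n - if n.Prime then Real.log n else 0) +
        2 * if n ∈ (4 * d.natAbs).primeFactors then Real.log n else 0 := by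
  have hnonneg := sum_idealLambda_nonneg (idealsOfNorm K n)
  have hle := sum_idealLambda_idealsOfNorm_le (K := K) n
  rw [hdeg, Nat.cast_two] at hle
  have : 0 ≤ ArithmeticFunction.vonMangoldt n := ArithmeticFunction.vonMangoldt_nonneg
  have hχ : |(oddJacobiSym d n : ℝ)| ≤ 1 := by exact_mod_cast abs_oddJacobiSym_le_one d n
  obtain ⟨hχ₁, hχ₂⟩ := abs_le.1 hχ
  have htrivial : |∑ 𝔞 ∈ idealsOfNorm K n, IdealLambda K 𝔞 -
      ArithmeticFunction.vonMangoldt n * (1 + oddJacobiSym d n)| ≤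
      2 * ArithmeticFunction.vonMangoldt n :=
    abs_sub_le_of_nonneg_of_le hnonneg hle (by nlinarith) (by nlinarith)
  by_cases hn : n.Prime
  · have hΛn := ArithmeticFunction.vonMangoldt_apply_prime hn
    rw [if_pos hn]
    by_cases hcop : n.Coprime (4 * d.natAbs)
    · have hodd : Odd n := (hcop.coprime_mul_right_right.coprime_dvd_right ⟨2, rfl⟩).odd_of_right
      rw [sum_idealLambda_idealsOfNorm_prime hdeg hd hθ hn hcop, oddJacobiSym, if_pos hodd, hΛn,
        sub_self, abs_zero, sub_self, mul_zero, zero_add]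
      have := Real.log_natCast_nonneg n
      positivity
    · have hd0 : d ≠ 0 := fun h ↦ hd (h ▸ IsSquare.zero)
      have hmem : n ∈ (4 * d.natAbs).primeFactors :=
        Nat.mem_primeFactors.2 ⟨hn, by rwa [hn.coprime_iff_not_dvd, not_not] at hcop, by positivity⟩
      rw [if_pos hmem, ← hΛn]
      linarith
  · rw [if_neg hn, if_neg fun h ↦ hn (Nat.prime_of_mem_primeFactors h)]
    linarith

lemma sum_vonMangoldt_sub_log_prime_le {x : ℝ} (hx : 1 ≤ x) :
    ∑ n ∈ Finset.Icc 1 ⌊x⌋₊,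
        (ArithmeticFunction.vonMangoldt n - if n.Prime then Real.log n else 0) ≤
      2 * √x * Real.log x := by
  rw [Finset.sum_sub_distrib, ← Finset.sum_filter]
  exact Chebyshev.psi_sub_theta_le hx

lemma abs_sum_idealLambda_sub_le (hdeg : Module.finrank ℚ K = 2) (hd : ¬ IsSquare d)
    (hθ : θ ^ 2 = d) {x : ℝ} (hx : 1 ≤ x) :
    |∑ 𝔞 ∈ idealsOfNormLE K x, IdealLambda K 𝔞 -
        ∑ n ∈ Finset.Icc 1 ⌊x⌋₊, ArithmeticFunction.vonMangoldt n * (1 + oddJacobiSym d n)| ≤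
      4 * √x * Real.log x + 2 * ∑ p ∈ (4 * d.natAbs).primeFactors, Real.log p := by
  have hramified : ∑ n ∈ Finset.Icc 1 ⌊x⌋₊,
      (if n ∈ (4 * d.natAbs).primeFactors then Real.log n else 0) ≤
      ∑ p ∈ (4 * d.natAbs).primeFactors, Real.log p := by
    rw [← Finset.sum_filter]
    exact Finset.sum_le_sum_of_subset_of_nonneg (fun n h ↦ (Finset.mem_filter.1 h).2)
      fun n _ _ ↦ Real.log_natCast_nonneg n
  rw [sum_idealsOfNormLE, ← Finset.sum_sub_distrib]
  refine (Finset.abs_sum_le_sum_abs _ _).trans ((Finset.sum_le_sum fun n _ ↦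
    abs_sum_idealLambda_idealsOfNorm_sub_le hdeg hd hθ n).trans ?_)
  rw [Finset.sum_add_distrib, ← Finset.mul_sum, ← Finset.mul_sum]
  linarith [sum_vonMangoldt_sub_log_prime_le hx]

lemma exists_abs_sum_vonMangoldt_mul_one_add_oddJacobiSym_sub_le (hd : Squarefree d)
    (hd1 : d ≠ 1) (j : ℕ) :
    ∃ C, 0 < C ∧ ∀ x : ℝ, 6 ≤ x →
      |∑ n ∈ Finset.Icc 1 ⌊x⌋₊, ArithmeticFunction.vonMangoldt n * (1 + oddJacobiSym d n) - x| ≤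
        C * x / Real.log x ^ j := by
  have : NeZero d := ⟨hd.ne_zero⟩
  have : NeZero (4 * d.natAbs) := ⟨by have := hd.ne_zero; positivity⟩
  have hχ : (jacobiChar d).ringHomComp (Int.castRingHom ℂ) ≠ 1 :=
    (MulChar.ringHomComp_ne_one_iff Int.cast_injective).2 (jacobiChar_ne_one hd hd1)
  refine exists_abs_sum_vonMangoldt_mul_one_add_sub_le hχ (fun n ↦ ?_) (fun n ↦ ?_) j
  · simp [jacobiChar_natCast]
  · exact_mod_cast (abs_le.1 (abs_oddJacobiSym_le_one d n)).1

end Quadratic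

lemma exists_sqrt_mul_log_add_log_sq_add_le {B : ℝ} (hB : 0 ≤ B) (j : ℕ) :
    ∃ C, 0 < C ∧ ∀ x : ℝ, 6 ≤ x →
      4 * √x * Real.log x + 2 * Real.log x ^ 2 + B ≤ C * x / Real.log x ^ j := by
  obtain ⟨C₁, hC₁, h₁⟩ := exists_log_pow_le (j + 1) (ε := 1 / 2) (by norm_num)
  obtain ⟨C₂, hC₂, h₂⟩ := exists_log_pow_le (j + 2) (ε := 1) (by norm_num)
  obtain ⟨C₃, hC₃, h₃⟩ := exists_log_pow_le j (ε := 1) (by norm_num)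
  refine ⟨4 * C₁ + 2 * C₂ + B * C₃, by positivity, fun x hx ↦ ?_⟩
  have hx1 : 1 ≤ x := by linarith
  have hL : 0 < Real.log x := Real.log_pos (by linarith)
  specialize h₁ x hx1
  specialize h₂ x hx1
  specialize h₃ x hx1
  rw [← Real.sqrt_eq_rpow] at h₁
  rw [Real.rpow_one] at h₂ h₃
  rw [le_div_iff₀ (pow_pos hL j)]
  calc (4 * √x * Real.log x + 2 * Real.log x ^ 2 + B) * Real.log x ^ j
      = 4 * √x * Real.log x ^ (j + 1) + 2 * Real.log x ^ (j + 2) + B * Real.log x ^ j := by ring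
    _ ≤ 4 * √x * (C₁ * √x) + 2 * (C₂ * x) + B * (C₃ * x) := by gcongr
    _ = 4 * C₁ * (√x * √x) + 2 * C₂ * x + B * C₃ * x := by ring
    _ = (4 * C₁ + 2 * C₂ + B * C₃) * x := by rw [Real.mul_self_sqrt (by linarith)]; ring

theorem exists_abs_sum_coprimeIdeals_sub_le (hdeg : Module.finrank ℚ K = 2) (j : ℕ) :
    ∃ C, 0 < C ∧ ∀ x : ℝ, 6 ≤ x → ∀ 𝔮 : Ideal (𝓞 K), 𝔮 ≠ ⊥ → (absNorm 𝔮 : ℝ) ≤ x →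
      |∑ 𝔞 ∈ idealsOfNormLE K x with CoprimeIdeals K 𝔞 𝔮, IdealLambda K 𝔞 - x| ≤
        C * x / Real.log x ^ j := by
  obtain ⟨d, θ, hd, hd1, hθ⟩ := exists_squarefree_sq_eq hdeg
  obtain ⟨C₀, hC₀, hmain⟩ := exists_abs_sum_vonMangoldt_mul_one_add_oddJacobiSym_sub_le hd hd1 j
  have hB : 0 ≤ ∑ p ∈ (4 * d.natAbs).primeFactors, Real.log p :=
    Finset.sum_nonneg fun n _ ↦ Real.log_natCast_nonneg n
  obtain ⟨C₁, hC₁, herror⟩ := exists_sqrt_mul_log_add_log_sq_add_le (mul_nonneg zero_le_two hB) j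
  refine ⟨C₀ + C₁, by positivity, fun x hx 𝔮 h𝔮 h𝔮x ↦ ?_⟩
  have hx1 : 1 ≤ x := by linarith
  have hsplit := Finset.sum_filter_add_sum_filter_not (idealsOfNormLE K x)
    (fun 𝔞 ↦ CoprimeIdeals K 𝔞 𝔮) (IdealLambda K)
  have hnot := sum_idealLambda_not_coprime_le h𝔮 hx1 h𝔮x
  have hnot_nonneg :=
    sum_idealLambda_nonneg {𝔞 ∈ idealsOfNormLE K x | ¬ CoprimeIdeals K 𝔞 𝔮}
  obtain ⟨hm₁, hm₂⟩ := abs_le.1 (hmain x hx)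
  obtain ⟨hs₁, hs₂⟩ :=
    abs_le.1 (abs_sum_idealLambda_sub_le hdeg (not_isSquare_of_squarefree hd hd1) hθ hx1)
  have he := herror x hx
  rw [add_mul, add_div, abs_le]
  constructor <;> linarith

lemma exists_abs_sum_coprimeIdeals_sub_le_rpow (hdeg : Module.finrank ℚ K = 2) (A : ℝ) :
    ∃ C, 0 < C ∧ ∀ x : ℝ, 6 ≤ x → ∀ 𝔮 : Ideal (𝓞 K), 𝔮 ≠ ⊥ → (absNorm 𝔮 : ℝ) ≤ x →
      |∑ 𝔞 ∈ idealsOfNormLE K x with CoprimeIdeals K 𝔞 𝔮, IdealLambda K 𝔞 - x| ≤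
        C * x * Real.log x ^ (-A) := by
  obtain ⟨C, hC, h⟩ := exists_abs_sum_coprimeIdeals_sub_le hdeg ⌈A⌉₊
  refine ⟨C, hC, fun x hx 𝔮 h𝔮 h𝔮x ↦ (h x hx 𝔮 h𝔮 h𝔮x).trans ?_⟩
  have hlog : 1 < Real.log x := one_lt_log_of_three_le (by linarith)
  rw [div_eq_mul_inv, ← Real.rpow_natCast, ← Real.rpow_neg (by linarith)]
  gcongr
  · exact hlog.le
  · exact Nat.le_ceil A

lemma abs_sum_coprimeIdeals_sub_le_of_le {x y : ℝ} (hx : 2 ≤ x) (hxy : x ≤ y)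
    (𝔮 : Ideal (𝓞 K)) {A : ℝ} (hA : 0 ≤ A) :
    |∑ 𝔞 ∈ idealsOfNormLE K x with CoprimeIdeals K 𝔞 𝔮, IdealLambda K 𝔞 - x| ≤
      (∑ 𝔞 ∈ idealsOfNormLE K y, IdealLambda K 𝔞 + y) * Real.log y ^ A * x *
        Real.log x ^ (-A) := by
  have hL : 0 < Real.log x := Real.log_pos (by linarith)
  have hnonneg := sum_idealLambda_nonneg {𝔞 ∈ idealsOfNormLE K x | CoprimeIdeals K 𝔞 𝔮}
  have hM := sum_idealLambda_nonneg (idealsOfNormLE K y)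
  have hle : ∑ 𝔞 ∈ idealsOfNormLE K x with CoprimeIdeals K 𝔞 𝔮, IdealLambda K 𝔞 ≤
      ∑ 𝔞 ∈ idealsOfNormLE K y, IdealLambda K 𝔞 := by
    refine Finset.sum_le_sum_of_subset_of_nonneg (fun 𝔞 h ↦ ?_)
      fun 𝔞 _ _ ↦ idealLambda_nonneg 𝔞
    have hmem := (mem_idealsOfNormLE (by linarith)).1 (Finset.mem_filter.1 h).1
    exact (mem_idealsOfNormLE (by linarith)).2 ⟨hmem.1, hmem.2.trans hxy⟩
  have hone : 1 ≤ Real.log y ^ A * Real.log x ^ (-A) := by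
    rw [Real.rpow_neg hL.le, ← div_eq_mul_inv, one_le_div (Real.rpow_pos_of_pos hL _)]
    gcongr
  set M := ∑ 𝔞 ∈ idealsOfNormLE K y, IdealLambda K 𝔞
  calc |∑ 𝔞 ∈ idealsOfNormLE K x with CoprimeIdeals K 𝔞 𝔮, IdealLambda K 𝔞 - x|
      ≤ M + y := abs_le.2 ⟨by linarith, by linarith⟩
    _ ≤ (M + y) * (Real.log y ^ A * Real.log x ^ (-A) * x) :=
        le_mul_of_one_le_right (by linarith) (one_le_mul_of_one_le_of_one_le hone (by linarith))
    _ = (M + y) * Real.log y ^ A * x * Real.log x ^ (-A) := by ring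

lemma tsum_coprimeIdeals_eq_sum {x : ℝ} (hx : 0 ≤ x) (𝔮 : Ideal (𝓞 K)) (f : Ideal (𝓞 K) → ℝ) :
    ∑' 𝔰 : {𝔰 : Ideal (𝓞 K) // 𝔰 ≠ ⊥ ∧ (absNorm 𝔰 : ℝ) ≤ x ∧ CoprimeIdeals K 𝔰 𝔮}, f 𝔰 =
      ∑ 𝔞 ∈ idealsOfNormLE K x with CoprimeIdeals K 𝔞 𝔮, f 𝔞 := by
  have hmem (𝔰 : Ideal (𝓞 K)) : 𝔰 ≠ ⊥ ∧ (absNorm 𝔰 : ℝ) ≤ x ∧ CoprimeIdeals K 𝔰 𝔮 ↔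
      𝔰 ∈ {𝔞 ∈ idealsOfNormLE K x | CoprimeIdeals K 𝔞 𝔮} := by
    rw [Finset.mem_filter, mem_idealsOfNormLE hx, and_assoc]
  rw [← Finset.tsum_subtype]
  exact (Equiv.subtypeEquivRight hmem).tsum_eq (fun 𝔞 ↦ f 𝔞.1)

end PrimeIdealTheorem

theorem statement19_general (K : Type) [Field K] [NumberField K]
    (hdeg : Module.finrank ℚ K = 2) (A : ℝ) (hA : 0 < A) :
    ∃ C : ℝ, 0 < C ∧ ∀ x : ℝ, 2 ≤ x → ∀ 𝔮 : Ideal (𝓞 K), 𝔮 ≠ ⊥ → (absNorm 𝔮 : ℝ) ≤ x →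
      |(∑' 𝔰 : {𝔰 : Ideal (𝓞 K) // 𝔰 ≠ ⊥ ∧ (absNorm 𝔰 : ℝ) ≤ x ∧ CoprimeIdeals K 𝔰 𝔮},
          IdealLambda K 𝔰) - x| ≤ C * x * Real.log x ^ (-A) := by
  obtain ⟨C, hC, hlarge⟩ := exists_abs_sum_coprimeIdeals_sub_le_rpow hdeg A
  set C' := (∑ 𝔞 ∈ idealsOfNormLE K 6, IdealLambda K 𝔞 + 6) * Real.log 6 ^ A
  have hC' : 0 ≤ C' := by
    have := sum_idealLambda_nonneg (idealsOfNormLE K 6)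
    positivity
  refine ⟨C + C', by positivity, fun x hx 𝔮 h𝔮 h𝔮x ↦ ?_⟩
  have hlog : 0 ≤ Real.log x := Real.log_nonneg (by linarith)
  rw [tsum_coprimeIdeals_eq_sum (by linarith)]
  rcases le_total 6 x with h6 | h6
  · refine (hlarge x h6 𝔮 h𝔮 h𝔮x).trans ?_
    gcongr
    linarith
  · refine (abs_sum_coprimeIdeals_sub_le_of_le hx h6 𝔮 hA.le).trans ?_
    gcongr
    linarith

/-- (Prime ideal theorem with a coprimality condition.) -/
theorem statement19
    (K : Type) [Field K] [NumberField K]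
    (d : ℤ) (hd1 : 1 < d) (hdsf : Squarefree d)
    (hdeg : Module.finrank ℚ K = 2) (hθ : ∃ θ : K, θ ^ 2 = (d : K))
    (A : ℝ) (hA : 0 < A) :
    ∃ C : ℝ, 0 < C ∧ ∀ (x : ℝ), 2 ≤ x → ∀ 𝔮 : Ideal (𝓞 K), 𝔮 ≠ ⊥ →
      (Ideal.absNorm 𝔮 : ℝ) ≤ x →
      |(∑' 𝔰 : {𝔰 : Ideal (𝓞 K) // 𝔰 ≠ ⊥ ∧ (Ideal.absNorm 𝔰 : ℝ) ≤ x ∧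
          CoprimeIdeals K 𝔰 𝔮}, IdealLambda K 𝔰) - x| ≤
        C * x * (Real.log x) ^ (-A) :=
  statement19_general K hdeg A hA

end
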